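/- arXiv:1606.08432 — 6 statements merged into one kernel-verified Lean document; each statement's English description precedes it below -/
import Mathlib

section
/- Let p ≥ 5 be a prime and n a positive integer. Then α_{np} ≡ (p/3) · α_n (mod p²), where (p/3) denotes the Legendre symbol of p modulo 3. -/
/-- The Legendre symbol `(p/3)`: `1` if `p ≡ 1 (mod 3)` and `-1` if `p ≡ 2 (mod 3)`. -/
def leg3 (p : ℕ) : ℤ := if p % 3 = 1 then 1 else -1

/-- `α_m = ∑_{k=0}^{m-1} C(2k,k)`. -/
def alpha (m : ℕ) : ℤ := ∑ k ∈ Finset.range m, ((2 * k).choose k : ℤ)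

open Polynomial in
/-- Linear functional on integer polynomials sending `X ^ k` to `φ k`. -/
noncomputable def TT (φ : ℕ → ℤ) : ℤ[X] →ₗ[ℤ] ℤ := (Polynomial.basisMonomials ℤ).constr ℤ φ

/-- The character modulo 3. -/
def chi (t : ℤ) : ℤ := if t % 3 = 1 then 1 else if t % 3 = 2 then -1 else 0

/-- The character modulo 3, cut off at positive arguments. -/
def psi (t : ℤ) : ℤ := if t ≤ 0 then 0 else chi t

open Polynomial in
lemma TT_X (φ : ℕ → ℤ) (k : ℕ) : TT φ (X ^ k) = φ k := by
  have := (Polynomial.basisMonomials ℤ).constr_basis ℤ φ k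
  simp only [Polynomial.coe_basisMonomials, Polynomial.monomial_one_right_eq_X_pow] at this
  exact this

open Polynomial in
lemma lin_ext (f g : ℤ[X] →ₗ[ℤ] ℤ) (h : ∀ k : ℕ, f (X ^ k) = g (X ^ k)) (q : ℤ[X]) :
    f q = g q := by
  have : f = g := by
    apply (Polynomial.basisMonomials ℤ).ext
    intro k
    simp only [Polynomial.coe_basisMonomials, Polynomial.monomial_one_right_eq_X_pow]
    exact h k
  rw [this]

open Polynomial in
lemma TT_mul_X (φ : ℕ → ℤ) (q : ℤ[X]) (j : ℕ) :
    TT φ (X ^ j * q) = TT (fun k => φ (j + k)) q := by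
  have := lin_ext ((TT φ).comp (LinearMap.mulLeft ℤ (X ^ j))) (TT (fun k => φ (j + k)))
    (fun k => by simp [TT_X, ← pow_add]) q
  simpa using this

lemma psi_step (t : ℤ) :
    psi (t + 1) + 2 * psi t + psi (t - 1) = psi t + if t = 0 then 1 else 0 := by
  have hc : chi (t + 1) + chi t + chi (t - 1) = 0 := by
    simp only [chi]; split_ifs <;> omega
  have h0 : chi 0 = 0 := rfl
  have h1 : chi 1 = 1 := rfl
  rcases lt_trichotomy t 0 with h | h | h
  · simp only [psi]
    rw [if_pos (by omega), if_pos (by omega), if_pos (by omega), if_neg (by omega)]; rfl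
  · subst h; decide
  · by_cases h2 : t = 1
    · subst h2; decide
    · simp only [psi]
      rw [if_neg (by omega), if_neg (by omega), if_neg (by omega), if_neg (by omega)]
      linarith

open Polynomial in
lemma alpha_eq (m : ℕ) : alpha m = TT (fun k => psi ((m : ℤ) - k)) ((1 + X) ^ (2 * m)) := by
  induction m with
  | zero =>
    have := TT_X (fun k => psi (((0 : ℕ) : ℤ) - k)) 0
    rw [pow_zero] at this
    simp only [Nat.mul_zero, pow_zero, this]
    simp [alpha, psi]
  | succ m ih =>
    have h1 : alpha (m + 1) = alpha m + ((2 * m).choose m : ℤ) := by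
      simp [alpha, Finset.sum_range_succ]
    have key := lin_ext
      ((TT (fun k => psi (((m + 1 : ℕ) : ℤ) - k))).comp (LinearMap.mulLeft ℤ ((1 + X) ^ 2)))
      (TT (fun k => psi ((m : ℤ) - k)) + Polynomial.lcoeff ℤ m)
      (fun k => by
        have e : ((1 + X) ^ 2 * X ^ k : ℤ[X]) = X ^ k + (2 : ℤ) • X ^ (k + 1) + X ^ (k + 2) := by
          rw [zsmul_eq_mul]; push_cast; ring
        simp only [LinearMap.comp_apply, LinearMap.mulLeft_apply, LinearMap.add_apply, e, map_add,
          map_smul, TT_X, Polynomial.lcoeff_apply, Polynomial.coeff_X_pow, smul_eq_mul]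
        have h := psi_step ((m : ℤ) - k)
        have e1 : ((m + 1 : ℕ) : ℤ) - k = (m : ℤ) - k + 1 := by push_cast; ring
        have e2 : ((m + 1 : ℕ) : ℤ) - (k + 1 : ℕ) = (m : ℤ) - k := by push_cast; ring
        have e3 : ((m + 1 : ℕ) : ℤ) - (k + 2 : ℕ) = (m : ℤ) - k - 1 := by push_cast; ring
        rw [e1, e2, e3, h]
        congr 1
        exact if_congr (by omega) rfl rfl) ((1 + X) ^ (2 * m))
    simp only [LinearMap.comp_apply, LinearMap.mulLeft_apply, LinearMap.add_apply,
      Polynomial.lcoeff_apply, Polynomial.coeff_one_add_X_pow, ← pow_add] at key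
    rw [h1, ih, show 2 * (m + 1) = 2 + 2 * m by ring, key]

open Polynomial in
lemma chi_sum (N : ℕ) : ∀ c : ℤ,
    TT (fun k => chi (c - k)) ((1 + X) ^ N) = (-1) ^ N * chi (c + N) := by
  induction N with
  | zero =>
    intro c
    have := TT_X (fun k => chi (c - k)) 0
    rw [pow_zero] at this
    simp [this]
  | succ N ih =>
    intro c
    have e : ((1 + X) ^ (N + 1) : ℤ[X]) = (1 + X) ^ N + X ^ 1 * (1 + X) ^ N := by ring
    have f : (fun k : ℕ => chi (c - ((1 + k : ℕ) : ℤ))) = fun k : ℕ => chi ((c - 1) - k) := by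
      funext k; congr 1; push_cast; ring
    rw [e, map_add, TT_mul_X, f, ih, ih]
    have : chi (c + N) + chi (c - 1 + N) = - chi (c + (N + 1 : ℕ)) := by
      simp only [chi]; push_cast; split_ifs <;> omega
    rw [← mul_add, this]; ring

lemma chi_mul (p : ℕ) (h3 : p % 3 ≠ 0) (t : ℤ) : chi (p * t) = leg3 p * chi t := by
  have h : ((p : ℤ) * t) % 3 = ((p : ℤ) % 3) * (t % 3) % 3 := Int.mul_emod _ _ _
  have hp : (p : ℤ) % 3 = 1 ∧ p % 3 = 1 ∨ (p : ℤ) % 3 = 2 ∧ p % 3 = 2 := by omega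
  have ht : t % 3 = 0 ∨ t % 3 = 1 ∨ t % 3 = 2 := by omega
  rcases hp with ⟨a, b⟩ | ⟨a, b⟩ <;> rcases ht with c | c | c <;>
    simp [chi, leg3, h, a, b, c]

open Polynomial in
/-- The middle part of `(1 + X) ^ p`. -/
noncomputable def RR (p : ℕ) : ℤ[X] := ∑ r ∈ Finset.Ico 1 p, (p.choose r : ℤ) • X ^ r

open Polynomial in
lemma RR_eq (p : ℕ) (hp : 1 ≤ p) : ((1 + X) ^ p : ℤ[X]) = (1 + X ^ p) + RR p := by
  rw [add_comm 1 X, add_pow, Finset.sum_range_succ, Finset.range_eq_Ico,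
    Finset.sum_eq_sum_Ico_succ_bot (by omega), RR]
  simp only [one_pow, mul_one, zsmul_eq_mul, zero_add, pow_zero, Nat.choose_zero_right,
    Nat.choose_self, Nat.cast_one, Int.cast_natCast]
  have : ∑ k ∈ Finset.Ico 1 p, (X ^ k * (p.choose k : ℤ[X])) =
    ∑ k ∈ Finset.Ico 1 p, ((p.choose k : ℤ[X]) * X ^ k) :=
    Finset.sum_congr rfl fun k _ => mul_comm _ _
  rw [this]; ring

open Polynomial in
lemma RR_dvd (p : ℕ) (hp : p.Prime) : ∃ Q : ℤ[X], RR p = (p : ℤ) • Q := by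
  have : (p : ℤ[X]) ∣ RR p := by
    apply Finset.dvd_sum
    intro r hr
    rw [Finset.mem_Ico] at hr
    obtain ⟨c, hc⟩ := hp.dvd_choose_self (by omega) hr.2
    rw [hc, zsmul_eq_mul]
    push_cast
    exact ⟨(c : ℤ[X]) * X ^ r, by ring⟩
  obtain ⟨Q, hQ⟩ := this
  exact ⟨Q, by rw [hQ, zsmul_eq_mul]; simp⟩

open Polynomial in
lemma chi_RR (p : ℕ) (hp1 : 1 ≤ p) (hodd : p % 2 = 1) (h3 : p % 3 ≠ 0) (m : ℤ) :
    TT (fun k => chi (p * m - k)) (RR p) = 0 := by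
  have h := chi_sum p (p * m)
  have h0 := TT_X (fun k => chi (p * m - k)) 0
  rw [pow_zero] at h0
  rw [RR_eq p hp1, map_add, map_add, h0, TT_X, (Nat.odd_iff.mpr hodd).neg_one_pow] at h
  have a1 : (p : ℤ) * m - (0 : ℕ) = p * m := by simp
  have a2 : (p : ℤ) * m - p = p * (m - 1) := by ring
  have a3 : (p : ℤ) * m + p = p * (m + 1) := by ring
  rw [a1, a2, a3, chi_mul p h3, chi_mul p h3, chi_mul p h3] at h
  have : chi m + chi (m - 1) + chi (m + 1) = 0 := by
    simp only [chi]; split_ifs <;> omega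
  linear_combination h - leg3 p * this

open Polynomial in
lemma psi_RR (p n j : ℕ) (hp1 : 1 ≤ p) (hodd : p % 2 = 1) (h3 : p % 3 ≠ 0) :
    TT (fun k => psi (((n * p : ℕ) : ℤ) - k)) (X ^ (p * j) * RR p) = 0 := by
  rw [TT_mul_X]
  by_cases hj : j < n
  · rw [← chi_RR p hp1 hodd h3 ((n : ℤ) - j)]
    simp only [RR, map_sum, map_smul, TT_X]
    apply Finset.sum_congr rfl
    intro r hr
    rw [Finset.mem_Ico] at hr
    have e : ((n * p : ℕ) : ℤ) - ((p * j + r : ℕ) : ℤ) = p * ((n : ℤ) - j) - r := by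
      push_cast; ring
    rw [e, psi, if_neg]
    have : (p : ℤ) * 1 ≤ p * ((n : ℤ) - j) := by
      apply mul_le_mul_of_nonneg_left <;> omega
    omega
  · simp only [RR, map_sum, map_smul, TT_X]
    apply Finset.sum_eq_zero
    intro r hr
    have e : n * p ≤ p * j + r := by
      have : p * n ≤ p * j := Nat.mul_le_mul_left _ (by omega)
      rw [mul_comm n p]; omega
    rw [psi, if_pos (by omega), smul_zero]

lemma psi_mul (p n j : ℕ) (hp1 : 1 ≤ p) (h3 : p % 3 ≠ 0) :
    psi (((n * p : ℕ) : ℤ) - (p * j : ℕ)) = leg3 p * psi ((n : ℤ) - j) := by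
  have e : ((n * p : ℕ) : ℤ) - (p * j : ℕ) = p * ((n : ℤ) - j) := by push_cast; ring
  have hp : (0 : ℤ) < p := by omega
  rw [e, psi, psi, chi_mul p h3]
  by_cases h : (n : ℤ) - j ≤ 0
  · rw [if_pos h, if_pos (by nlinarith), mul_zero]
  · rw [if_neg h, if_neg (by push Not at h ⊢; positivity)]

open Polynomial in
lemma psi_expand (p n : ℕ) (hp1 : 1 ≤ p) (h3 : p % 3 ≠ 0) (q : ℤ[X]) :
    TT (fun k => psi (((n * p : ℕ) : ℤ) - k)) (expand ℤ p q) =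
      leg3 p * TT (fun k => psi ((n : ℤ) - k)) q := by
  have := lin_ext ((TT (fun k => psi (((n * p : ℕ) : ℤ) - k))).comp (expand ℤ p).toLinearMap)
    (leg3 p • TT (fun k => psi ((n : ℤ) - k)))
    (fun k => by
      simp only [LinearMap.comp_apply, AlgHom.toLinearMap_apply, map_pow, expand_X, ← pow_mul,
        TT_X, LinearMap.smul_apply, smul_eq_mul]
      exact psi_mul p n k hp1 h3) q
  simpa using this

open Polynomial in
lemma psi_expand_RR (p n : ℕ) (hp1 : 1 ≤ p) (hodd : p % 2 = 1) (h3 : p % 3 ≠ 0) (q : ℤ[X]) :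
    TT (fun k => psi (((n * p : ℕ) : ℤ) - k)) (expand ℤ p q * RR p) = 0 := by
  have := lin_ext ((TT (fun k => psi (((n * p : ℕ) : ℤ) - k))).comp
      ((LinearMap.mulRight ℤ (RR p)).comp (expand ℤ p).toLinearMap)) 0
    (fun k => by
      simp only [LinearMap.comp_apply, AlgHom.toLinearMap_apply, map_pow, expand_X, ← pow_mul,
        LinearMap.mulRight_apply, LinearMap.zero_apply]
      exact psi_RR p n k hp1 hodd h3) q
  simpa using this

open Polynomial in
theorem alpha_supercongruence_aux (p n : ℕ) (hp : p.Prime) (hp5 : 5 ≤ p) :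
    alpha (n * p) ≡ leg3 p * alpha n [ZMOD (p : ℤ) ^ 2] := by
  have hodd : p % 2 = 1 := hp.eq_two_or_odd.resolve_left (by omega)
  have h3 : p % 3 ≠ 0 := fun h => by
    have := (Nat.prime_dvd_prime_iff_eq Nat.prime_three hp).1 (Nat.dvd_of_mod_eq_zero h)
    omega
  have hp1 : 1 ≤ p := by omega
  obtain ⟨Q, hQ⟩ := RR_dvd p hp
  obtain ⟨K, hK⟩ := Polynomial.powAddExpansion (1 + X ^ p : ℤ[X]) (RR p) (2 * n)
  have hE (N : ℕ) : ((1 + X ^ p) ^ N : ℤ[X]) = expand ℤ p ((1 + X) ^ N) := by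
    simp [expand_X]
  have e : ((1 + X) ^ (2 * (n * p)) : ℤ[X]) =
      expand ℤ p ((1 + X) ^ (2 * n)) +
      ((2 * n : ℕ) : ℤ) • (expand ℤ p ((1 + X) ^ (2 * n - 1)) * RR p) +
      ((p : ℤ) ^ 2) • (K * Q ^ 2) := by
    rw [show 2 * (n * p) = p * (2 * n) by ring, pow_mul, RR_eq p hp1, hK, ← hE, ← hE]
    rw [hQ]
    simp only [zsmul_eq_mul]
    push_cast
    ring
  rw [alpha_eq (n * p), e, map_add, map_add, map_smul, map_smul, psi_expand p n hp1 h3,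
    psi_expand_RR p n hp1 hodd h3, ← alpha_eq, smul_zero, add_zero, smul_eq_mul]
  exact Int.ModEq.symm ((Int.modEq_iff_dvd).2 ⟨_, by rw [add_sub_cancel_left]⟩)

theorem alpha_supercongruence (p n : ℕ) (hp : p.Prime) (hp5 : 5 ≤ p) (hn : 0 < n) :
    alpha (n * p) ≡ leg3 p * alpha n [ZMOD (p : ℤ) ^ 2] := by
  exact alpha_supercongruence_aux p n hp hp5
end

section
/- Let p ≥ 5 be a prime with p ≡ 1 (mod 3) and let n be a positive integer. Then β_{np} ≡ β_n (mod p²). -/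
/-- Congruence of rational numbers modulo `p^m`: `a ≡ b (mod p^m)` means
`a - b = p^m · (s/t)` with `p` not dividing `t`. -/
def ratCongr (p m : ℕ) (a b : ℚ) : Prop :=
  ∃ s t : ℤ, ¬ ((p : ℤ) ∣ t) ∧ (a - b) * (t : ℚ) = (p : ℚ) ^ m * (s : ℚ)

/-- `β_m = ∑_{k=0}^{m-1} C(2k,k)/(k+1)`. -/
def beta (m : ℕ) : ℚ := ∑ k ∈ Finset.range m, ((2 * k).choose k : ℚ) / (k + 1)

open PowerSeries in
lemma coeff_aux (p : ℕ) (hp : 0 < p) (A B : ℤ⟦X⟧) (h : ∀ j, coeff (j * p) A = coeff j B)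
    (N n : ℕ) : coeff (n * p) ((1 + X ^ p) ^ N * A) = coeff n ((1 + X) ^ N * B) := by
  rw [add_comm 1 (X ^ p : ℤ⟦X⟧), add_comm 1 (X : ℤ⟦X⟧), add_pow, add_pow, Finset.sum_mul,
    Finset.sum_mul, map_sum, map_sum]
  refine Finset.sum_congr rfl fun i _ => ?_
  have e : ∀ (Y : ℤ⟦X⟧) (C : ℤ⟦X⟧), Y * 1 ^ (N - i) * (N.choose i : ℤ⟦X⟧) * C
      = (N.choose i) • (Y * C) := by
    intro Y C
    rw [nsmul_eq_mul]; ring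
  rw [e, e, map_nsmul, map_nsmul, ← pow_mul, coeff_X_pow_mul', coeff_X_pow_mul']
  have e2 : p * i ≤ n * p ↔ i ≤ n := by
    rw [mul_comm p i]; exact Nat.mul_le_mul_right_iff hp
  simp only [e2]
  split_ifs with hi
  · rw [← h, mul_comm p i, Nat.sub_mul]
  · rfl

/-- The power series `X (1 - X) / (1 + X + X^2)`. -/
def wser : PowerSeries ℤ := PowerSeries.mk fun i =>
  if i = 0 then 0 else if i % 3 = 1 then 1 else if i % 3 = 2 then -2 else 1

open PowerSeries in
lemma wser_mul : (1 + X + X ^ 2) * wser = X * (1 - X) := by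
  have e : (1 + X + X ^ 2) * wser = wser + X * (wser + X * wser) := by ring
  rw [e]
  ext i
  rcases i with _ | _ | _ | i
  · simp [wser]
  · simp [wser, coeff_succ_X_mul]
  · simp [wser, coeff_succ_X_mul, coeff_one]
  · simp only [map_add, map_sub, coeff_succ_X_mul, wser, coeff_mk, coeff_one, coeff_X]
    have : i % 3 = 0 ∨ i % 3 = 1 ∨ i % 3 = 2 := by omega
    rcases this with h | h | h <;> simp [Nat.add_mod, h]

open PowerSeries in
lemma beta_eq (m : ℕ) : beta m = ((coeff m ((1 + X) ^ (2 * m) * wser) : ℤ) : ℚ) := by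
  induction m with
  | zero => simp [beta, wser]
  | succ m ih =>
    have e : (1 + X) ^ (2 * (m + 1)) * wser
        = X * ((1 + X) ^ (2 * m) * wser) + X * ((1 + X) ^ (2 * m) * (1 - X)) := by
      have := wser_mul
      linear_combination (1 + X) ^ (2 * m) * this
    have e3 : (((2 * m).choose m : ℚ) / (m + 1)) =
        ((coeff m ((1 + X) ^ (2 * m) * (1 - X) : ℤ⟦X⟧) : ℤ) : ℚ) := by
      have e4 : ((1 + X) ^ (2 * m) * (1 - X) : ℤ⟦X⟧)
        = (((1 + Polynomial.X) ^ (2 * m) : Polynomial ℤ) : ℤ⟦X⟧)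
          - X * (((1 + Polynomial.X) ^ (2 * m) : Polynomial ℤ) : ℤ⟦X⟧) := by
        push_cast; ring
      rw [e4]
      rcases m with _ | m
      · simp
      · rw [map_sub, coeff_succ_X_mul, Polynomial.coeff_coe, Polynomial.coeff_coe,
          Polynomial.coeff_one_add_X_pow, Polynomial.coeff_one_add_X_pow]
        have := Nat.choose_succ_right_eq (2 * (m + 1)) m
        have h2 : 2 * (m + 1) - m = m + 2 := by omega
        rw [h2] at this
        have h3 : ((2 * (m + 1)).choose (m + 1) : ℚ) * (m + 1)
          = (2 * (m + 1)).choose m * (m + 2) := by exact_mod_cast this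
        push_cast
        rw [div_eq_iff (by positivity)]
        linear_combination -h3
    rw [beta, Finset.sum_range_succ, ← beta, ih, e, map_add, coeff_succ_X_mul, coeff_succ_X_mul,
      e3]
    push_cast
    ring

open Polynomial in
lemma phi_dvd (p : ℕ) (h6 : p % 6 = 1) :
    (1 + X + X ^ 2 : ℤ[X]) ∣ (1 + X) ^ p - 1 - X ^ p := by
  obtain ⟨k, rfl⟩ : ∃ k, p = 6 * k + 1 := ⟨p / 6, by omega⟩
  have h1 : (1 + X + X ^ 2 : ℤ[X]) ∣ ((1 + X) ^ 6) ^ k - 1 ^ k :=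
    dvd_trans ⟨X * (X ^ 2 + 3 * X + 3) * (X + 2), by ring⟩
      (sub_dvd_pow_sub_pow _ _ k)
  have h2 : (1 + X + X ^ 2 : ℤ[X]) ∣ (X ^ 6) ^ k - 1 ^ k :=
    dvd_trans ⟨(X - 1) * (X ^ 3 + 1), by ring⟩ (sub_dvd_pow_sub_pow _ _ k)
  have e : ((1 + X) ^ (6 * k + 1) - 1 - X ^ (6 * k + 1) : ℤ[X])
    = (((1 + X) ^ 6) ^ k - 1 ^ k) * (1 + X) - ((X ^ 6) ^ k - 1 ^ k) * X := by
    rw [pow_succ, pow_succ, pow_mul, pow_mul, one_pow]; ring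
  rw [e]
  exact dvd_sub (h1.mul_right _) (h2.mul_right _)

open Polynomial in
lemma D_coeff (p : ℕ) (hp : p.Prime) : ∃ E : ℤ[X],
    (1 + X) ^ p - 1 - X ^ p = C (p : ℤ) * E ∧ ((1 + X) ^ p - 1 - X ^ p : ℤ[X]).natDegree < p := by
  have hc : ∀ i, ((1 + X) ^ p - 1 - X ^ p : ℤ[X]).coeff i =
      if i = 0 ∨ p ≤ i then 0 else (p.choose i : ℤ) := by
    intro i
    have := hp.pos
    rw [coeff_sub, coeff_sub, coeff_one_add_X_pow, coeff_one, coeff_X_pow]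
    rcases Nat.lt_trichotomy i p with h | h | h
    · rcases Nat.eq_zero_or_pos i with h0 | h0
      · subst h0; simp [h.ne]
      · simp [h0.ne', h.ne, Nat.not_le.2 h]
    · subst h; simp [this.ne']
    · have : i ≠ 0 := by omega
      simp [this, h.ne', h.le, Nat.choose_eq_zero_of_lt h]
  have h1 : C (p : ℤ) ∣ ((1 + X) ^ p - 1 - X ^ p : ℤ[X]) := by
    rw [C_dvd_iff_dvd_coeff]
    intro i
    rw [hc]
    split_ifs with h
    · exact dvd_zero _
    · push Not at h
      exact_mod_cast hp.dvd_choose_self h.1 h.2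
  obtain ⟨E, hE⟩ := h1
  refine ⟨E, hE, ?_⟩
  have := hp.pos
  have h2 : ((1 + X) ^ p - 1 - X ^ p : ℤ[X]).natDegree ≤ p - 1 := by
    rw [natDegree_le_iff_coeff_eq_zero]
    intro i hi
    rw [hc, if_pos (Or.inr (by omega))]
  omega

lemma pow_expand {R : Type*} [CommRing R] (a d : R) (N : ℕ) :
    ∃ c, (a + d) ^ N = a ^ N + N * a ^ (N - 1) * d + c * d ^ 2 := by
  obtain ⟨c, hc⟩ := Polynomial.powAddExpansion a d N
  exact ⟨c, hc⟩

theorem beta_supercongruence_one_mod_three (p n : ℕ) (hp : p.Prime) (hp5 : 5 ≤ p)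
    (hp3 : p % 3 = 1) (hn : 0 < n) :
    ratCongr p 2 (beta (n * p)) (beta n) := by
  have hodd : p % 2 = 1 := by
    rcases hp.eq_two_or_odd with h | h <;> omega
  have h6 : p % 6 = 1 := by omega
  obtain ⟨R, hR⟩ := phi_dvd p h6
  obtain ⟨E, hE, hdeg⟩ := D_coeff p hp
  set D : Polynomial ℤ := (1 + Polynomial.X) ^ p - 1 - Polynomial.X ^ p with hD
  -- the polynomial `V = D W`
  set V : Polynomial ℤ := R * (Polynomial.X * (1 - Polynomial.X)) with hV
  have hVW : (D : PowerSeries ℤ) * wser = V := by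
    have := wser_mul
    rw [hR, hV]
    push_cast
    linear_combination (R : PowerSeries ℤ) * this
  have hVc : ∀ j, V.coeff (j * p) = 0 := by
    intro j
    rcases Nat.eq_zero_or_pos j with rfl | hj
    · simp [hV, Polynomial.mul_coeff_zero]
    · apply Polynomial.coeff_eq_zero_of_natDegree_lt
      by_cases hR0 : R = 0
      · rw [hV, hR0]; simp; exact ⟨hj, hp.pos⟩
      · have hm : (1 + Polynomial.X + Polynomial.X ^ 2 : Polynomial ℤ).natDegree = 2 := by
          compute_degree!
        have hm0 : (1 + Polynomial.X + Polynomial.X ^ 2 : Polynomial ℤ) ≠ 0 := by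
          intro h; rw [h] at hm; simp at hm
        have h1 : D.natDegree = 2 + R.natDegree := by
          rw [hR, Polynomial.natDegree_mul hm0 hR0, hm]
        have h2 : (Polynomial.X * (1 - Polynomial.X) : Polynomial ℤ).natDegree ≤ 2 := by
          compute_degree
        have h3 : V.natDegree ≤ R.natDegree + 2 :=
          Polynomial.natDegree_mul_le.trans (by omega)
        have : p ≤ j * p := Nat.le_mul_of_pos_left p hj
        omega
  obtain ⟨c, hc⟩ := pow_expand (1 + PowerSeries.X ^ p : PowerSeries ℤ) (D : PowerSeries ℤ) (2 * n)
  have hbase : (1 + PowerSeries.X : PowerSeries ℤ) ^ p = (1 + PowerSeries.X ^ p) + (D : PowerSeries ℤ) := by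
    rw [hD]; push_cast; ring
  have hEc : (D : PowerSeries ℤ) = PowerSeries.C (p : ℤ) * (E : PowerSeries ℤ) := by
    rw [hE]; push_cast; rfl
  have key : (1 + PowerSeries.X : PowerSeries ℤ) ^ (2 * (n * p)) * wser
      = (1 + PowerSeries.X ^ p) ^ (2 * n) * wser
        + (2 * n) • ((1 + PowerSeries.X ^ p) ^ (2 * n - 1) * (V : PowerSeries ℤ))
        + PowerSeries.C ((p : ℤ) ^ 2) * (c * (E : PowerSeries ℤ) ^ 2 * wser) := by
    have : 2 * (n * p) = p * (2 * n) := by ring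
    rw [this, pow_mul, hbase, hc, ← hVW, nsmul_eq_mul, map_pow]
    have h2 : (c * (D : PowerSeries ℤ) ^ 2) = c * (PowerSeries.C (p : ℤ) * (E : PowerSeries ℤ)) ^ 2 := by
      rw [hEc]
    rw [h2]
    ring
  have hA := coeff_aux p hp.pos wser wser (by
    intro j
    simp only [wser, PowerSeries.coeff_mk, Nat.mul_mod j p, hp3, mul_one, Nat.mod_mod,
      Nat.mul_eq_zero, hp.ne_zero, or_false]) (2 * n) n
  have hB := coeff_aux p hp.pos (V : PowerSeries ℤ) 0 (by
    intro j
    rw [Polynomial.coeff_coe, hVc]; simp) (2 * n - 1) n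
  refine ⟨PowerSeries.coeff (n * p) (c * (E : PowerSeries ℤ) ^ 2 * wser), 1, ?_, ?_⟩
  · intro h
    have := Int.le_of_dvd one_pos h
    omega
  · rw [beta_eq, beta_eq, key, map_add, map_add, map_nsmul, hA, hB, PowerSeries.coeff_C_mul]
    push_cast
    simp
end

section
/- Let p ≥ 5 be a prime with p ≡ 2 (mod 3) and let n be a positive integer. Then β_{np} ≡ -γ_n (mod p²). -/
/-- `γ_m = ∑_{k=0}^{m-1} C(2k,k)·(3k+2)/(k+1)`. -/
def gamma (m : ℕ) : ℚ :=
  ∑ k ∈ Finset.range m, ((2 * k).choose k : ℚ) * (3 * k + 2) / (k + 1)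

open Polynomial in
/-- The linear functional on `ℤ[X]` with `X^k ↦ g k`. -/
noncomputable def LF (g : ℕ → ℤ) : ℤ[X] →ₗ[ℤ] ℤ :=
  Polynomial.lsum (fun k => g k • LinearMap.id)

open Polynomial

theorem LF_apply (g : ℕ → ℤ) (P : ℤ[X]) : LF g P = ∑ k ∈ P.support, g k * P.coeff k := by
  simp [LF, Polynomial.lsum_apply, Polynomial.sum_def]

theorem LF_X_pow (g : ℕ → ℤ) (k : ℕ) : LF g (X ^ k) = g k := by
  simp [LF, Polynomial.lsum_apply, ← monomial_one_right_eq_X_pow, Polynomial.sum_monomial_index]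

theorem LF_add (g h : ℕ → ℤ) (P : ℤ[X]) : LF (fun k => g k + h k) P = LF g P + LF h P := by
  simp only [LF_apply, ← Finset.sum_add_distrib, add_mul]

theorem LF_smul (c : ℤ) (h : ℕ → ℤ) (P : ℤ[X]) : LF (fun k => c * h k) P = c * LF h P := by
  simp only [LF_apply, Finset.mul_sum, mul_assoc]

theorem LF_single (c : ℤ) (N : ℕ) (P : ℤ[X]) :
    LF (fun k => if k = N then c else 0) P = c * P.coeff N := by
  simp only [LF_apply, ite_mul, zero_mul, Finset.sum_ite_eq']
  split_ifs with h
  · rfl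
  · rw [Polynomial.notMem_support_iff.mp h]; simp

theorem LF_X_pow_mul (g : ℕ → ℤ) (a : ℕ) (P : ℤ[X]) :
    LF g (X ^ a * P) = LF (fun k => g (a + k)) P := by
  induction P using Polynomial.induction_on' with
  | add p q hp hq => rw [mul_add, map_add, map_add, hp, hq]
  | monomial n c =>
    rw [← C_mul_X_pow_eq_monomial, ← smul_eq_C_mul, mul_smul_comm, map_smul, map_smul, ← pow_add, LF_X_pow, LF_X_pow]

theorem LF_pascal (g : ℕ → ℤ) (M : ℕ) :
    LF g ((1 + X) ^ (M + 1)) = LF (fun k => g k + g (k + 1)) ((1 + X) ^ M) := by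
  have h : ((1 + X : ℤ[X])) ^ (M + 1) = (1 + X) ^ M + X ^ 1 * (1 + X) ^ M := by ring
  rw [h, map_add, LF_X_pow_mul, LF_add]
  simp only [add_comm 1]

theorem LF_periodic (v : ℕ → ℤ) (hv : ∀ j, v j + v (j + 1) + v (j + 2) = 0) (M : ℕ) :
    ∀ a, LF (fun k => v (a + k)) ((1 + X) ^ M) = (-1) ^ M * v (a + 2 * M) := by
  induction M with
  | zero => intro a; have := LF_X_pow (fun k => v (a + k)) 0; simpa using this
  | succ M ih =>
    intro a
    rw [LF_pascal]
    have : (fun k => v (a + k) + v (a + (k + 1))) = fun k => (-1) * v ((a + 2) + k) := by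
      funext k
      have := hv (a + k)
      rw [show a + 2 + k = a + k + 2 by ring, show a + (k + 1) = a + k + 1 by ring]
      linarith
    rw [this, LF_smul, ih, show a + 2 * (M + 1) = a + 2 + 2 * M by ring]
    ring

/-- cut-off weight -/
def cutW (v : ℕ → ℤ) (N k : ℕ) : ℤ := if N < k then v (k - N) else 0

theorem cutW_step (v : ℕ → ℤ) (hv : ∀ j, v j + v (j + 1) + v (j + 2) = 0) (N : ℕ) :
    LF (cutW v (N + 1)) ((1 + X) ^ (2 * (N + 1))) = LF (cutW v N) ((1 + X) ^ (2 * N))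
      + v 1 * (2 * N).choose N - v 0 * (2 * N).choose (N + 1) := by
  rw [show 2 * (N + 1) = 2 * N + 1 + 1 by ring, LF_pascal, LF_pascal]
  have : (fun k => cutW v (N + 1) k + cutW v (N + 1) (k + 1) +
      (cutW v (N + 1) (k + 1) + cutW v (N + 1) (k + 1 + 1))) =
      fun k => (cutW v N k + (if k = N then v 1 else 0)) + (if k = N + 1 then -v 0 else 0) := by
    funext k
    rcases lt_trichotomy k N with h | h | h
    · simp [cutW, show ¬ N + 1 < k by omega, show ¬ N + 1 < k + 1 by omega,
        show ¬ N + 1 < k + 1 + 1 by omega, show ¬ N < k by omega, show ¬ k = N by omega,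
        show ¬ k = N + 1 by omega]
    · subst h; simp [cutW]
    · obtain ⟨d, rfl⟩ := Nat.exists_eq_add_of_lt h
      rcases d with _ | d
      · have := hv 0
        simp [cutW]
        simp at this
        linarith
      · have h1 := hv (d + 1)
        have h2 := hv (d + 2)
        simp only [cutW]
        rw [if_pos (by omega), if_pos (by omega), if_pos (by omega), if_pos (by omega),
          if_neg (by omega), if_neg (by omega),
          show N + (d + 1) + 1 - (N + 1) = d + 1 by omega,
          show N + (d + 1) + 1 - N = d + 2 by omega,
          show N + (d + 1) + 1 + 1 - (N + 1) = d + 1 + 1 by omega,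
          show N + (d + 1) + 1 + 1 + 1 - (N + 1) = d + 1 + 2 by omega]
        have e1 : d + 2 = d + 1 + 1 := rfl
        simp only [e1] at *
        linarith
  rw [this, LF_add, LF_add, LF_single, LF_single, coeff_one_add_X_pow, coeff_one_add_X_pow]
  push_cast
  ring

theorem cutW_zero (v : ℕ → ℤ) : LF (cutW v 0) ((1 + X) ^ (2 * 0)) = 0 := by
  have := LF_X_pow (cutW v 0) 0
  simpa [cutW] using this

theorem choose_succ_rat (k : ℕ) :
    ((2 * k).choose (k + 1) : ℚ) = ((2 * k).choose k : ℚ) * k / (k + 1) := by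
  have := Nat.choose_succ_right_eq (2 * k) k
  rw [show 2 * k - k = k by omega] at this
  have h : ((2 * k).choose (k + 1) : ℚ) * (k + 1) = (2 * k).choose k * k := by exact_mod_cast this
  rw [eq_div_iff (by positivity), h]

/-- weights `1,1,-2` -/
def wt (j : ℕ) : ℤ := if j % 3 = 2 then -2 else 1

theorem wt_sum (j : ℕ) : wt j + wt (j + 1) + wt (j + 2) = 0 := by
  unfold wt
  split_ifs <;> omega

theorem wt2_sum (j : ℕ) : wt (2 * j) + wt (2 * (j + 1)) + wt (2 * (j + 2)) = 0 := by
  have h : j % 3 = 0 ∨ j % 3 = 1 ∨ j % 3 = 2 := by omega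
  unfold wt
  rcases h with h | h | h <;> split_ifs <;> omega

theorem beta_eq_s2 (N : ℕ) : beta N = (LF (cutW wt N) ((1 + X) ^ (2 * N)) : ℤ) := by
  induction N with
  | zero => rw [cutW_zero]; simp [beta]
  | succ N ih =>
    rw [cutW_step wt wt_sum]
    push_cast
    rw [← ih, choose_succ_rat]
    simp only [beta, Finset.sum_range_succ, wt]
    norm_num
    field_simp
    ring

theorem gamma_eq (N : ℕ) :
    -gamma N = (LF (cutW (fun j => wt (2 * j)) N) ((1 + X) ^ (2 * N)) : ℤ) := by
  induction N with
  | zero => rw [cutW_zero]; simp [gamma]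
  | succ N ih =>
    rw [cutW_step _ wt2_sum]
    push_cast
    rw [← ih, choose_succ_rat]
    simp only [gamma, Finset.sum_range_succ, wt]
    norm_num
    field_simp
    ring

theorem LF_interior (p n m : ℕ) (hp : 0 < p) (hp2 : Odd p) (hp3 : p % 3 = 2) :
    LF (cutW wt (n * p)) (X ^ (m * p) * ((1 + X) ^ p - (1 + X ^ p))) = 0 := by
  rcases lt_or_ge m n with h | h
  · have hle : m * p + p ≤ n * p := by nlinarith
    rw [LF_X_pow_mul, LF_apply]
    apply Finset.sum_eq_zero
    intro k _
    by_cases hk : k ≤ p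
    · simp [cutW, show ¬ n * p < m * p + k by omega]
    · have : ((1 + X : ℤ[X]) ^ p - (1 + X ^ p)).coeff k = 0 := by
        rw [coeff_sub, coeff_add, coeff_one_add_X_pow, coeff_X_pow, coeff_one,
          Nat.choose_eq_zero_of_lt (by omega), if_neg (by omega), if_neg (by omega)]
        simp
      rw [this, mul_zero]
  · obtain ⟨d, rfl⟩ := Nat.exists_eq_add_of_le h
    rw [LF_X_pow_mul]
    have : (fun k => cutW wt (n * p) ((n + d) * p + k)) =
        fun k => wt (d * p + k) + if k = 0 then (cutW wt (n * p) ((n + d) * p) - wt (d * p)) else 0 := by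
      funext k
      rcases Nat.eq_zero_or_pos k with rfl | hk
      · simp
      · rw [if_neg (by omega), add_zero, cutW, add_mul, if_pos (by omega)]
        congr 1; omega
    rw [this, LF_add, LF_single, map_sub, map_add, LF_periodic wt wt_sum, LF_X_pow]
    have h0 := LF_X_pow (fun k => wt (d * p + k)) 0
    rw [pow_zero] at h0
    rw [h0, coeff_sub, coeff_add, coeff_one_add_X_pow, coeff_X_pow, coeff_one, if_neg hp.ne,
      if_pos rfl, hp2.neg_one_pow]
    simp only [wt, Nat.choose_zero_right, Nat.cast_one, add_zero, sub_self, mul_zero]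
    generalize d * p = q
    have h : q % 3 = 0 ∨ q % 3 = 1 ∨ q % 3 = 2 := by omega
    rcases h with h | h | h <;>
        split_ifs <;> omega

theorem main_dvd (p n : ℕ) (hp : p.Prime) (hp5 : 5 ≤ p) (hp3 : p % 3 = 2) :
    ∃ s : ℤ, LF (cutW wt (n * p)) ((1 + X) ^ (2 * (n * p))) -
      LF (cutW (fun j => wt (2 * j)) n) ((1 + X) ^ (2 * n)) = (p : ℤ) ^ 2 * s := by
  have hodd : Odd p := hp.odd_of_ne_two (by omega)
  obtain ⟨F, hF⟩ := exists_add_pow_prime_eq hp (1 : ℤ[X]) X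
  rw [one_pow] at hF
  obtain ⟨K, hK⟩ := powAddExpansion (1 + X ^ p : ℤ[X]) ((1 + X) ^ p - (1 + X ^ p)) (2 * n)
  have hY : ((1 + X : ℤ[X]) ^ p - (1 + X ^ p)) ^ 2 = ((p : ℤ) ^ 2) • (X * F) ^ 2 := by
    rw [hF, zsmul_eq_mul]; push_cast; ring
  have h1 : (1 + X : ℤ[X]) ^ (2 * (n * p)) =
      (1 + X ^ p + ((1 + X) ^ p - (1 + X ^ p))) ^ (2 * n) := by
    rw [add_sub_cancel, ← pow_mul]; congr 1; ring
  refine ⟨LF (cutW wt (n * p)) (K * (X * F) ^ 2), ?_⟩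
  rw [h1, hK, hY, mul_smul_comm, map_add, map_add, map_smul, smul_eq_mul]
  have hB : LF (cutW wt (n * p)) (((2 * n : ℕ) : ℤ[X]) * (1 + X ^ p) ^ (2 * n - 1) *
      ((1 + X) ^ p - (1 + X ^ p))) = 0 := by
    rw [add_comm 1 (X ^ p : ℤ[X]), add_pow, mul_assoc, ← nsmul_eq_mul, map_nsmul, Finset.sum_mul, map_sum,
      Finset.sum_eq_zero, smul_zero]
    intro m _
    rw [one_pow, mul_one, mul_comm _ (Nat.cast _), mul_assoc, ← nsmul_eq_mul, map_nsmul, ← pow_mul,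
      mul_comm p m, add_comm (X ^ p : ℤ[X]) 1, LF_interior p n m hp.pos hodd hp3, smul_zero]
  have hA : LF (cutW wt (n * p)) ((1 + X ^ p) ^ (2 * n)) =
      LF (cutW (fun j => wt (2 * j)) n) ((1 + X) ^ (2 * n)) := by
    rw [add_comm 1 (X ^ p : ℤ[X]), add_comm 1 (X : ℤ[X]), add_pow, add_pow, map_sum, map_sum]
    refine Finset.sum_congr rfl fun m _ => ?_
    rw [one_pow, mul_one, mul_one, mul_comm _ (Nat.cast _), mul_comm _ (Nat.cast _),
      ← nsmul_eq_mul, ← nsmul_eq_mul, map_nsmul, map_nsmul, ← pow_mul, LF_X_pow, LF_X_pow]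
    congr 1
    unfold cutW
    by_cases h : n < m
    · obtain ⟨d, rfl⟩ := Nat.exists_eq_add_of_lt h
      rw [if_pos h, if_pos (by nlinarith)]
      rw [show p * (n + d + 1) - n * p = p * (d + 1) by
        rw [show p * (n + d + 1) = n * p + p * (d + 1) by ring]; omega,
        show n + d + 1 - n = d + 1 by omega]
      unfold wt
      simp only [Nat.mul_mod p, hp3, Nat.mul_mod 2 (d + 1), Nat.reduceMod]
    · rw [if_neg h, if_neg]
      have : m * p ≤ n * p := Nat.mul_le_mul_right p (by omega)
      rw [mul_comm p m]; omega
  rw [hA, hB]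
  ring

theorem beta_supercongruence_two_mod_three (p n : ℕ) (hp : p.Prime) (hp5 : 5 ≤ p)
    (hp3 : p % 3 = 2) (hn : 0 < n) :
    ratCongr p 2 (beta (n * p)) (-(gamma n)) := by
  obtain ⟨s, hs⟩ := main_dvd p n hp hp5 hp3
  refine ⟨s, 1, ?_, ?_⟩
  · intro h
    have := Int.le_of_dvd one_pos h
    omega
  · rw [beta_eq_s2, gamma_eq]
    push_cast
    rw [mul_one]
    exact_mod_cast hs
end

section
/- Let p ≥ 5 be a prime. Then ∑_{k=0}^{p-2} (C(2k,k)/(k+1))·(H_{2k} - H_k) ≡ 5/2 + (3/2)·(p/3) (mod p), as a congruence of rational numbers, where (p/3) denotes the Legendre symbol of p modulo 3. -/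
/-- The `n`-th harmonic number `H_n = ∑_{j=1}^n 1/j`, with `H_0 = 0`. -/
def H (n : ℕ) : ℚ := ∑ j ∈ Finset.range n, 1 / (j + 1 : ℚ)

namespace CatH
open Polynomial

variable {p : ℕ}

/-- The polynomial `C(2k+x, k)` over `ZMod p`. -/
noncomputable def P (p k : ℕ) : (ZMod p)[X] :=
  C ((k.factorial : ZMod p)⁻¹) * ∏ j ∈ Finset.range k, (X + C ((k : ZMod p) + 1 + j))

lemma P_comp (k : ℕ) (c : ZMod p) : (P p k).comp (X + C c) =
    C ((k.factorial : ZMod p)⁻¹) * ∏ j ∈ Finset.range k, (X + C (c + k + 1 + j)) := by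
  unfold P
  rw [mul_comp, C_comp, Polynomial.prod_comp]
  congr 1
  refine Finset.prod_congr rfl fun j _ => ?_
  simp only [add_comp, X_comp, C_comp, map_add]
  ring

lemma natCast_ne [Fact p.Prime] {k : ℕ} (h0 : 0 < k) (hk : k < p) : (k : ZMod p) ≠ 0 := by
  rw [Ne, ZMod.natCast_eq_zero_iff]
  exact Nat.not_dvd_of_pos_of_lt h0 hk

lemma P_rec [Fact p.Prime] (k : ℕ) (hk : k + 1 < p) :
    P p (k+1) = (P p (k+1)).comp (X + C (-1)) + (P p k).comp (X + C 1) := by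
  have hne : ((k : ZMod p) + 1) ≠ 0 := by
    have := natCast_ne (p := p) (Nat.succ_pos k) hk
    push_cast at this; exact this
  rw [P_comp, P_comp, P, Finset.prod_range_succ, Finset.prod_range_succ' (fun j => X + C (-1 + _ + 1 + (j : ZMod p)))]
  set M : (ZMod p)[X] := ∏ j ∈ Finset.range k, (X + C ((k:ZMod p) + 2 + j)) with hM
  have h1 : ∏ x ∈ Finset.range k, (X + C (((k + 1 : ℕ) : ZMod p) + 1 + (x : ZMod p))) = M :=
    Finset.prod_congr rfl fun j _ => by push_cast; congr 2; ring
  have h2 : ∏ x ∈ Finset.range k, (X + C (-1 + ((k + 1 : ℕ) : ZMod p) + 1 + ((x + 1 : ℕ) : ZMod p))) = M :=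
    Finset.prod_congr rfl fun j _ => by push_cast; congr 2; ring
  have h3 : ∏ x ∈ Finset.range k, (X + C (1 + (k : ZMod p) + 1 + (x : ZMod p))) = M :=
    Finset.prod_congr rfl fun j _ => by congr 2; ring
  have h4 : C ((k.factorial : ZMod p)⁻¹) = C (((k+1).factorial : ZMod p)⁻¹) * C ((k : ZMod p) + 1) := by
    rw [← C_mul, Nat.factorial_succ]; push_cast; rw [mul_inv, mul_right_comm, inv_mul_cancel₀ hne, one_mul]
  rw [h1, h2, h3, h4]
  simp only [map_add, map_neg, map_one]
  push_cast
  simp only [map_add, map_one, map_natCast, map_zero]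
  ring

lemma P_rec2 [Fact p.Prime] (k : ℕ) (hk : k + 1 < p) :
    (X - 1) * (C ((k : ZMod p) + 1)⁻¹ * P p k) = (P p (k+1)).comp (X + C (-2)) - P p k := by
  have hne : ((k : ZMod p) + 1) ≠ 0 := by
    have := natCast_ne (p := p) (Nat.succ_pos k) hk
    push_cast at this; exact this
  rw [P_comp, P, Finset.prod_range_succ' (fun j => X + C (-2 + _ + 1 + (j : ZMod p)))]
  set M : (ZMod p)[X] := ∏ j ∈ Finset.range k, (X + C ((k:ZMod p) + 1 + j)) with hM
  have h2 : ∏ x ∈ Finset.range k, (X + C (-2 + ((k + 1 : ℕ) : ZMod p) + 1 + ((x + 1 : ℕ) : ZMod p))) = M :=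
    Finset.prod_congr rfl fun j _ => by push_cast; congr 2; ring
  have h4 : C (((k+1).factorial : ZMod p)⁻¹) = C ((k.factorial : ZMod p)⁻¹) * C ((k : ZMod p) + 1)⁻¹ := by
    rw [← C_mul, Nat.factorial_succ]; push_cast; rw [mul_inv, mul_comm]
  have h5 : (C ((k : ZMod p) + 1)⁻¹ : (ZMod p)[X]) * ((k : (ZMod p)[X]) + 1) = 1 := by
    have : ((k : (ZMod p)[X]) + 1) = C ((k : ZMod p) + 1) := by simp
    rw [this, ← C_mul, inv_mul_cancel₀ hne, C_1]
  have h6 : (C (-2 + ((k + 1 : ℕ) : ZMod p) + 1 + ((0 : ℕ) : ZMod p)) : (ZMod p)[X]) = k := by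
    rw [← map_natCast (C : ZMod p →+* _)]; congr 1; push_cast; ring
  rw [h2, h4, h6]
  linear_combination (-C ((k.factorial : ZMod p)⁻¹) * M) * h5

lemma prod_all [Fact p.Prime] : ∏ j ∈ Finset.range p, (X + C (j : ZMod p)) = X ^ p - X := by
  have hp := (Fact.out : p.Prime)
  have hr := FiniteField.roots_X_pow_card_sub_X (ZMod p)
  rw [ZMod.card] at hr
  have hd := FiniteField.X_pow_card_sub_X_natDegree_eq (ZMod p) hp.one_lt
  have hm : (X ^ p - X : (ZMod p)[X]).Monic :=
    monic_X_pow_sub (by rw [degree_X]; exact_mod_cast hp.one_lt)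
  have h := prod_multiset_X_sub_C_of_monic_of_roots_card_eq hm (by
    rw [hr, hd]; simp [ZMod.card])
  rw [hr] at h
  rw [← h]
  change _ = ∏ a : ZMod p, (X - C a)
  rw [← Equiv.prod_comp (Equiv.neg (ZMod p))]
  refine Finset.prod_bij (fun j _ => (j : ZMod p)) (fun _ _ => Finset.mem_univ _) ?_ ?_ ?_
  · intro i hi j hj hij
    rw [Finset.mem_range] at hi hj
    rw [ZMod.natCast_eq_natCast_iff'] at hij
    rwa [Nat.mod_eq_of_lt hi, Nat.mod_eq_of_lt hj] at hij
  · intro b _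
    exact ⟨b.val, Finset.mem_range.2 (ZMod.val_lt b), ZMod.natCast_zmod_val b⟩
  · intro j _
    simp

lemma P_last [Fact p.Prime] : (P p (p-1)).comp (X + C 1) = 1 - X ^ (p-1) := by
  have hp := (Fact.out : p.Prime)
  obtain ⟨n, rfl⟩ : ∃ n, p = n + 1 := ⟨p - 1, by have := hp.pos; omega⟩
  have h := prod_all (p := n + 1)
  rw [Finset.prod_range_succ'] at h
  rw [P_comp]
  have hw : (((n+1) - 1).factorial : ZMod (n+1)) = -1 := ZMod.wilsons_lemma (n+1)
  rw [hw]
  simp only [Nat.add_sub_cancel]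
  have h1 : ∏ x ∈ Finset.range n, (X + C (1 + (n : ZMod (n+1)) + 1 + (x : ZMod (n+1)))) =
      ∏ x ∈ Finset.range n, (X + C (((x+1 : ℕ) : ZMod (n+1)))) :=
    Finset.prod_congr rfl fun j _ => by
      congr 2
      have : ((n + 1 : ℕ) : ZMod (n+1)) = 0 := ZMod.natCast_self _
      push_cast at this ⊢
      linear_combination this
  rw [h1]
  have hX : (X : (ZMod (n+1))[X]) ≠ 0 := X_ne_zero
  apply mul_left_cancel₀ hX
  have hi : C ((-1 : ZMod (n+1))⁻¹) = -1 := by rw [inv_neg, inv_one]; simp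
  rw [hi]
  simp only [Nat.cast_zero, map_zero, add_zero] at h
  linear_combination -h

noncomputable def A (p : ℕ) : (ZMod p)[X] := ∑ k ∈ Finset.range p, P p k

noncomputable def F (p : ℕ) : (ZMod p)[X] :=
  ∑ k ∈ Finset.range (p-1), C ((k : ZMod p) + 1)⁻¹ * P p k

lemma P_zero : P p 0 = 1 := by simp [P]

lemma A_split [Fact p.Prime] : A p = ∑ k ∈ Finset.range (p-1), P p k + P p (p-1) := by
  rw [← Finset.sum_range_succ, Nat.sub_add_cancel (Fact.out : p.Prime).pos, A]

lemma A_split' [Fact p.Prime] : A p = ∑ k ∈ Finset.range (p-1), P p (k+1) + 1 := by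
  rw [← P_zero (p := p), ← Finset.sum_range_succ', Nat.sub_add_cancel (Fact.out : p.Prime).pos, A]

lemma A_rec [Fact p.Prime] :
    A p = (A p).comp (X + C (-1)) + (A p).comp (X + C 1) - (1 - X ^ (p-1)) := by
  have h1 := congrArg (fun f => f.comp (X + C (1 : ZMod p))) (A_split (p := p))
  have h2 := congrArg (fun f => f.comp (X + C (-1 : ZMod p))) (A_split' (p := p))
  simp only [add_comp, Polynomial.sum_comp, one_comp] at h1 h2
  rw [P_last] at h1
  have h3 : ∑ k ∈ Finset.range (p-1), P p (k+1) =
     ∑ k ∈ Finset.range (p-1), (P p (k+1)).comp (X + C (-1)) + ∑ k ∈ Finset.range (p-1), (P p k).comp (X + C 1) := by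
    rw [← Finset.sum_add_distrib]
    refine Finset.sum_congr rfl fun k hk => P_rec k ?_
    have := Finset.mem_range.1 hk; omega
  have h4 := A_split' (p := p)
  linear_combination h4 + h3 - h1 - h2

lemma F_eq [Fact p.Prime] :
    (X - 1) * F p = (A p).comp (X + C (-2)) - A p - (X + C (-1)) ^ (p-1) := by
  have h0 : P p (p-1) = 1 - (X + C (-1)) ^ (p-1) := by
    have := congrArg (fun f => f.comp (X + C (-1 : ZMod p))) (P_last (p := p))
    simp only [comp_assoc, sub_comp, pow_comp, X_comp, one_comp, add_comp, C_comp] at this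
    rw [← this]; simp
  have h1 := A_split (p := p)
  have h2 := congrArg (fun f => f.comp (X + C (-2 : ZMod p))) (A_split' (p := p))
  simp only [add_comp, Polynomial.sum_comp, one_comp] at h2
  have h3 : (X - 1) * F p = ∑ k ∈ Finset.range (p-1), (P p (k+1)).comp (X + C (-2)) -
      ∑ k ∈ Finset.range (p-1), P p k := by
    rw [← Finset.sum_sub_distrib, F, Finset.mul_sum]
    refine Finset.sum_congr rfl fun k hk => P_rec2 k ?_
    have := Finset.mem_range.1 hk; omega
  linear_combination h3 + h1 - h2 + h0

/-- A solution of the homogeneous recurrence vanishes. -/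
lemma vanish [Fact p.Prime] (hp5 : 5 ≤ p) (g : ZMod p → ZMod p)
    (hg : ∀ a, g (a+1) - g a + g (a-1) = 0) (a : ZMod p) : g a = 0 := by
  have h3 : ∀ a, g (a + 3) = - g a := fun a => by
    have e1 := hg (a+1)
    have e2 := hg (a+2)
    rw [show a + 1 + 1 = a + 2 by ring, show a + 1 - 1 = a by ring] at e1
    rw [show a + 2 + 1 = a + 3 by ring, show a + 2 - 1 = a + 1 by ring] at e2
    linear_combination e1 + e2
  have hn : ∀ n : ℕ, g (a + 3 * n) = (-1)^n * g a := fun n => by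
    induction n with
    | zero => simp
    | succ n ih => rw [Nat.cast_succ, mul_add, mul_one, ← add_assoc, h3, ih, pow_succ]; ring
  have := hn p
  rw [ZMod.natCast_self, mul_zero, add_zero, Odd.neg_one_pow ((Fact.out : p.Prime).odd_of_ne_two (by omega))] at this
  have h2 : (2 : ZMod p) ≠ 0 := by
    have := natCast_ne (p := p) (k := 2) (by norm_num) (by omega)
    exact_mod_cast this
  have h4 : 2 * g a = 0 := by linear_combination this
  exact (mul_eq_zero.1 h4).resolve_left h2


/-- The period-six sequence `0, 1, 1, 0, -1, -1, ...`. -/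
def u : ℕ → ℤ
  | 0 => 0
  | 1 => 1
  | n + 2 => u (n + 1) - u n

lemma u_three (n : ℕ) : u (n + 3) = - u n := by
  have h1 : u (n + 3) = u (n + 2) - u (n + 1) := rfl
  have h2 : u (n + 2) = u (n + 1) - u n := rfl
  rw [h1, h2]; ring

lemma u_six (m r : ℕ) : u (6 * m + r) = u r := by
  induction m with
  | zero => simp
  | succ m ih =>
    rw [show 6 * (m + 1) + r = 6 * m + r + 3 + 3 by ring, u_three, u_three, ih, neg_neg]

lemma u_diff (n r : ℕ) : (fwdDiff 1)^[n] u r = u (r + 2 * n) := by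
  induction n generalizing r with
  | zero => simp
  | succ n ih =>
    rw [Function.iterate_succ_apply', fwdDiff, ih, ih]
    have h : u (r + 2 * n + 2) = u (r + 2 * n + 1) - u (r + 2 * n) := rfl
    rw [show r + 2 * (n + 1) = r + 2 * n + 2 by ring, h,
      show r + 1 + 2 * n = r + 2 * n + 1 by ring]

lemma choose_pred [Fact p.Prime] (k : ℕ) (hk : k < p) :
    ((p - 1).choose k : ZMod p) = (-1) ^ k := by
  have hp := (Fact.out : p.Prime)
  induction k with
  | zero => simp
  | succ k ih =>
    have h := Nat.choose_succ_succ (p - 1) k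
    rw [Nat.succ_eq_add_one, Nat.succ_eq_add_one, Nat.sub_add_cancel hp.pos] at h
    have h0 : (p.choose (k+1) : ZMod p) = 0 := by
      rw [ZMod.natCast_eq_zero_iff]
      exact hp.dvd_choose_self (Nat.succ_ne_zero k) hk
    rw [h] at h0
    push_cast at h0
    rw [ih (by omega)] at h0
    rw [pow_succ]
    linear_combination h0


lemma two_ne [Fact p.Prime] (hp5 : 5 ≤ p) : (2 : ZMod p) ≠ 0 := by
  have := natCast_ne (p := p) (k := 2) (by norm_num) (by omega)
  exact_mod_cast this

lemma mod_six [Fact p.Prime] (hp5 : 5 ≤ p) : p % 6 = 1 ∨ p % 6 = 5 := by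
  have hp := (Fact.out : p.Prime)
  have ho := Nat.odd_iff.1 (hp.odd_of_ne_two (by omega))
  have h3 : p % 3 ≠ 0 := fun h => by
    have := (Nat.prime_dvd_prime_iff_eq Nat.prime_three hp).1 (Nat.dvd_of_mod_eq_zero h)
    omega
  omega

lemma u_p [Fact p.Prime] (hp5 : 5 ≤ p) : u p = 1 ∨ u p = -1 := by
  rw [← Nat.div_add_mod p 6, u_six]
  rcases mod_six hp5 with h | h <;> rw [h] <;> decide

lemma u_two_p [Fact p.Prime] (hp5 : 5 ≤ p) : u (2 * p) = u p := by
  have h1 : u p = u (p % 6) := by conv_lhs => rw [← Nat.div_add_mod p 6, u_six]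
  have h2 : u (2 * p) = u (2 * (p % 6)) := by
    conv_lhs => rw [← Nat.div_add_mod p 6, mul_add, mul_left_comm, u_six]
  rw [h1, h2]
  rcases mod_six hp5 with h | h <;> rw [h] <;> decide

lemma sum_u [Fact p.Prime] (hp5 : 5 ≤ p) : ∑ k ∈ Finset.range (p-1), (u (k+1) : ZMod p) * ((k : ZMod p) + 1)⁻¹ = 0 := by
  have hp := (Fact.out : p.Prime)
  have ho := hp.odd_of_ne_two (by omega)
  have h := fwdDiff_iter_eq_sum_shift 1 u p 0
  rw [u_diff, zero_add, u_two_p hp5, Finset.sum_range_succ] at h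
  simp only [zero_add, smul_eq_mul, mul_one, Nat.sub_self, pow_zero, Nat.choose_self,
    Nat.cast_one, one_mul] at h
  rw [right_eq_add] at h
  have h' : ∑ k ∈ Finset.range (p - 1), (-1 : ℤ) ^ (p - (k+1)) * ((p.choose (k+1) / p : ℕ) : ℤ) * u (k+1) = 0 := by
    rw [show Finset.range p = Finset.range (p - 1 + 1) by rw [Nat.sub_add_cancel hp.pos],
      Finset.sum_range_succ', show u 0 = 0 from rfl, mul_zero, add_zero] at h
    have hp0 : (p : ℤ) ≠ 0 := by exact_mod_cast hp.ne_zero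
    apply mul_left_cancel₀ hp0
    rw [mul_zero, ← h, Finset.mul_sum]
    refine Finset.sum_congr rfl fun k hk => ?_
    have hk' := Finset.mem_range.1 hk
    have hd : p ∣ p.choose (k+1) := hp.dvd_choose_self (Nat.succ_ne_zero k) (by omega)
    have : (p.choose (k+1) : ℤ) = p * ((p.choose (k+1) / p : ℕ) : ℤ) := by
      exact_mod_cast (Nat.mul_div_cancel' hd).symm
    rw [this]; ring
  have h2 := congrArg (fun z : ℤ => (z : ZMod p)) h'
  simp only [Int.cast_sum, Int.cast_zero] at h2
  rw [← h2]
  refine Finset.sum_congr rfl fun k hk => ?_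
  have hk' := Finset.mem_range.1 hk
  have hne : ((k : ZMod p) + 1) ≠ 0 := by
    have := natCast_ne (p := p) (Nat.succ_pos k) (by omega)
    push_cast at this; exact this
  have hd : p ∣ p.choose (k+1) := hp.dvd_choose_self (Nat.succ_ne_zero k) (by omega)
  have hc : (p.choose (k+1) / p) * (k+1) = (p - 1).choose k := by
    apply Nat.eq_of_mul_eq_mul_left hp.pos
    rw [← mul_assoc, Nat.mul_div_cancel' hd]
    have := Nat.add_one_mul_choose_eq (p - 1) k
    rw [Nat.sub_add_cancel hp.pos] at this
    exact this.symm
  have hc' : ((p.choose (k+1) / p : ℕ) : ZMod p) = (-1) ^ k * ((k : ZMod p) + 1)⁻¹ := by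
    rw [eq_mul_inv_iff_mul_eq₀ hne, ← choose_pred k (by omega), ← hc]; push_cast; rfl
  have hs : (-1 : ZMod p) ^ (p - (k+1)) * (-1) ^ k = 1 := by
    rw [← pow_add, show p - (k+1) + k = p - 1 by omega]
    exact (Nat.Odd.sub_odd ho odd_one).neg_one_pow
  rw [Int.cast_mul, Int.cast_mul, Int.cast_natCast, hc']
  push_cast
  linear_combination (-(u (k+1) : ZMod p) * ((k : ZMod p) + 1)⁻¹) * hs

lemma fA [Fact p.Prime] (hp5 : 5 ≤ p) (a : ZMod p) : (A p).eval a =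
    (A p).eval (a-1) + (A p).eval (a+1) - (1 - a^(p-1)) := by
  have h := congrArg (fun f => f.eval a) (A_rec (p := p))
  simpa [eval_comp, ← sub_eq_add_neg] using h

lemma cast_pred [Fact p.Prime] (hp5 : 5 ≤ p) : ((p - 1 : ℕ) : ZMod p) = -1 := by
  rw [Nat.cast_sub (by omega)]; simp

lemma fD [Fact p.Prime] (hp5 : 5 ≤ p) (a : ZMod p) : (derivative (A p)).eval a =
    (derivative (A p)).eval (a-1) + (derivative (A p)).eval (a+1) - a^(p-2) := by
  have h := congrArg (fun f => (derivative f).eval a) (A_rec (p := p))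
  simp only [derivative_add, derivative_sub, derivative_comp, derivative_X, derivative_C,
    derivative_X_pow, derivative_one, add_zero, one_mul, eval_add, eval_sub, eval_comp, eval_X,
    eval_C, eval_mul, eval_pow, eval_zero, eval_natCast, mul_one, eval_one, cast_pred hp5,
    ← sub_eq_add_neg, show p - 1 - 1 = p - 2 by omega] at h
  linear_combination h

lemma A_even [Fact p.Prime] (hp5 : 5 ≤ p) (a : ZMod p) : (A p).eval (-a) = (A p).eval a := by
  have ho := (Fact.out : p.Prime).odd_of_ne_two (by omega)
  have hev : Even (p - 1) := Nat.Odd.sub_odd ho odd_one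
  have := vanish hp5 (fun a => (A p).eval (-a) - (A p).eval a) (fun a => by
    have h1 := fA hp5 a
    have h2 := fA hp5 (-a)
    rw [hev.neg_pow] at h2
    simp only [show -(a+1) = -a - 1 by ring, show -(a-1) = -a + 1 by ring]
    linear_combination h1 - h2) a
  linear_combination this

lemma D_odd [Fact p.Prime] (hp5 : 5 ≤ p) (a : ZMod p) : (derivative (A p)).eval (-a) = -(derivative (A p)).eval a := by
  have ho := (Fact.out : p.Prime).odd_of_ne_two (by omega)
  have hod : Odd (p - 2) := Nat.Odd.sub_even (by omega) ho even_two
  have := vanish hp5 (fun a => (derivative (A p)).eval (-a) + (derivative (A p)).eval a) (fun a => by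
    have h1 := fD hp5 a
    have h2 := fD hp5 (-a)
    rw [hod.neg_pow] at h2
    simp only [show -(a+1) = -a - 1 by ring, show -(a-1) = -a + 1 by ring]
    linear_combination -h1 - h2) a
  linear_combination this

lemma A_zero [Fact p.Prime] (hp5 : 5 ≤ p) : (A p).eval 0 = (leg3 p : ZMod p) := by
  have hp := (Fact.out : p.Prime)
  have h2 := two_ne hp5
  have hrec : ∀ n : ℕ, n + 1 < p → (A p).eval ((n + 2 : ℕ) : ZMod p) =
      (A p).eval ((n + 1 : ℕ) : ZMod p) - (A p).eval (n : ZMod p) := fun n hn => by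
    have h := fA hp5 ((n + 1 : ℕ) : ZMod p)
    rw [ZMod.pow_card_sub_one_eq_one (natCast_ne (Nat.succ_pos n) hn)] at h
    push_cast at h ⊢
    rw [show (n : ZMod p) + 1 - 1 = n by ring, show (n : ZMod p) + 1 + 1 = n + 2 by ring] at h
    linear_combination -h
  have h3 : ∀ n : ℕ, n + 2 < p → (A p).eval ((n + 3 : ℕ) : ZMod p) = -(A p).eval (n : ZMod p) :=
    fun n hn => by
      have e1 := hrec n (by omega)
      have e2 := hrec (n+1) (by omega)
      rw [show n + 1 + 2 = n + 3 by ring, show n + 1 + 1 = n + 2 by ring] at e2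
      linear_combination e1 + e2
  have h6 : ∀ m r : ℕ, 6 * m + r ≤ p → (A p).eval ((6 * m + r : ℕ) : ZMod p) = (A p).eval (r : ZMod p) := by
    intro m r
    induction m with
    | zero => intro _; simp
    | succ m ih =>
      intro h
      have e1 := h3 (6 * m + r) (by omega)
      have e2 := h3 (6 * m + r + 3) (by omega)
      rw [show 6 * (m + 1) + r = 6 * m + r + 3 + 3 by ring, e2, e1, ih (by omega), neg_neg]
  have h1 : 2 * (A p).eval 1 - (A p).eval 0 = 1 := by
    have h := fA hp5 0
    have he := A_even hp5 1
    rw [zero_pow (by omega), zero_sub, zero_add] at h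
    linear_combination -h - he
  have hlast := h6 (p / 6) (p % 6) (by omega)
  rw [Nat.div_add_mod, ZMod.natCast_self] at hlast
  have hmod : p % 6 = 1 ∨ p % 6 = 5 := by
    have ho := Nat.odd_iff.1 (hp.odd_of_ne_two (by omega))
    have h3 : p % 3 ≠ 0 := fun h => by
      have := (Nat.prime_dvd_prime_iff_eq Nat.prime_three hp).1 (Nat.dvd_of_mod_eq_zero h)
      omega
    omega
  rcases hmod with h | h
  · rw [h, Nat.cast_one] at hlast
    have : leg3 p = 1 := by unfold leg3; rw [if_pos (by omega)]
    rw [this]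
    push_cast
    linear_combination h1 + 2 * hlast
  · rw [h] at hlast
    have : leg3 p = -1 := by unfold leg3; rw [if_neg (by omega)]
    rw [this]
    have e1 := h3 2 (by omega)
    have e2 := hrec 0 (by omega)
    norm_num at e1 e2 hlast ⊢
    linear_combination -h1 + 2 * hlast + 2 * e1 - 2 * e2

lemma D_neg_one [Fact p.Prime] (hp5 : 5 ≤ p) (z0 : (derivative (A p)).eval 0 = 0) : (derivative (A p)).eval (-1) = 0 := by
  have hI : ∀ n : ℕ, n < p → (u n : ZMod p) * (derivative (A p)).eval ((n : ZMod p) + 1)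
      - (u (n+1) : ZMod p) * (derivative (A p)).eval (n : ZMod p) =
      ∑ k ∈ Finset.range n, (u (k+1) : ZMod p) * ((k : ZMod p) + 1)⁻¹ := by
    intro n
    induction n with
    | zero => intro _; simp [u, z0]
    | succ n ih =>
      intro hn
      rw [Finset.sum_range_succ, ← ih (by omega)]
      have h := fD hp5 ((n : ZMod p) + 1)
      have hne : ((n : ZMod p) + 1) ≠ 0 := by
        have := natCast_ne (p := p) (Nat.succ_pos n) hn
        push_cast at this; exact this
      have hpow : ((n : ZMod p) + 1) ^ (p - 2) = ((n : ZMod p) + 1)⁻¹ := by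
        apply eq_inv_of_mul_eq_one_left
        rw [← pow_succ, show p - 2 + 1 = p - 1 by omega]
        exact ZMod.pow_card_sub_one_eq_one hne
      rw [hpow, show (n : ZMod p) + 1 - 1 = n by ring] at h
      have hu : u (n + 1 + 1) = u (n + 1) - u n := rfl
      rw [hu]
      push_cast
      linear_combination -(u (n+1) : ZMod p) * h
  have h := hI (p - 1) (by omega)
  rw [sum_u hp5, cast_pred hp5, neg_add_cancel, z0, show p - 1 + 1 = p by omega] at h
  rcases u_p hp5 with h' | h' <;> rw [h'] at h <;> push_cast at h
  · linear_combination -h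
  · linear_combination h

lemma F_deriv [Fact p.Prime] (hp5 : 5 ≤ p) : 2 * (derivative (F p)).eval 0 = 5 + 3 * (leg3 p : ZMod p) := by
  have ho := (Fact.out : p.Prime).odd_of_ne_two (by omega)
  have hod : Odd (p - 2) := Nat.Odd.sub_even (by omega) ho even_two
  have hev : Even (p - 1) := Nat.Odd.sub_odd ho odd_one
  have h2 := two_ne hp5
  rw [← A_zero hp5]
  have hF0 := congrArg (fun f => f.eval 0) (F_eq (p := p))
  have hF1 := congrArg (fun f => (derivative f).eval 0) (F_eq (p := p))
  simp only [derivative_add, derivative_sub, derivative_comp, derivative_X, derivative_C,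
    derivative_X_pow, derivative_one, derivative_mul, derivative_pow, add_zero, zero_add, one_mul, eval_add, eval_sub, eval_comp, eval_X,
    eval_C, eval_mul, eval_pow, eval_zero, eval_natCast, mul_one, eval_one, cast_pred hp5, zero_sub, sub_zero, map_natCast,
    hod.neg_one_pow, hev.neg_one_pow, show p - 1 - 1 = p - 2 by omega] at hF0 hF1
  have a0 := fA hp5 0
  have a1 := fA hp5 (-1)
  rw [zero_pow (by omega), zero_sub, zero_add, A_even hp5 1] at a0
  rw [hev.neg_one_pow, show (-1 : ZMod p) - 1 = -2 by ring, neg_add_cancel, A_even hp5 1] at a1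
  have d0 := fD hp5 0
  have d1 := fD hp5 (-1)
  rw [zero_pow (by omega), zero_sub, zero_add] at d0
  rw [hod.neg_one_pow, show (-1 : ZMod p) - 1 = -2 by ring, neg_add_cancel] at d1
  have o0 := D_odd hp5 0
  have o1 := D_odd hp5 1
  rw [neg_zero] at o0
  have z0 : (derivative (A p)).eval 0 = 0 := by
    have : 2 * (derivative (A p)).eval 0 = 0 := by linear_combination o0
    exact (mul_eq_zero.1 this).resolve_left h2
  have z0' : (derivative (A p)).eval (-2) - (derivative (A p)).eval (-1) = -1 := by
    linear_combination -d1 - z0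
  have z1 : (derivative (A p)).eval (-1) = 0 := by
    exact D_neg_one hp5 z0
  linear_combination -2 * hF1 - 2 * hF0 - 2 * z0' - 2 * z1 + 2 * z0 + 2 * a1 + a0


/-- Reduction mod `p` of a `p`-integral rational. -/
def Red (p : ℕ) (q : ℚ) (z : ZMod p) : Prop :=
  ∃ s t : ℤ, ¬ ((p : ℤ) ∣ t) ∧ q * t = s ∧ z * t = s

lemma Red.add [Fact p.Prime] {q r : ℚ} {z w : ZMod p} (h : Red p q z) (h' : Red p r w) :
    Red p (q + r) (z + w) := by
  obtain ⟨s, t, ht, e, f⟩ := h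
  obtain ⟨s', t', ht', e', f'⟩ := h'
  refine ⟨s * t' + s' * t, t * t', ?_, ?_, ?_⟩
  · intro h
    rcases (Nat.prime_iff_prime_int.1 (Fact.out : p.Prime)).dvd_or_dvd h with h | h <;> contradiction
  · push_cast; linear_combination t' * e + t * e'
  · push_cast; linear_combination t' * f + t * f'

lemma Red.sum [Fact p.Prime] {ι : Type*} (s : Finset ι) {q : ι → ℚ} {z : ι → ZMod p}
    (h : ∀ i ∈ s, Red p (q i) (z i)) : Red p (∑ i ∈ s, q i) (∑ i ∈ s, z i) := by
  classical
  induction s using Finset.induction_on with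
  | empty =>
    exact ⟨0, 1, fun h => (Fact.out : p.Prime).one_lt.ne' (by
      have := Int.eq_one_of_dvd_one (by positivity) h; exact_mod_cast this), by simp, by simp⟩
  | insert a s ha ih =>
    rw [Finset.sum_insert ha, Finset.sum_insert ha]
    exact (h a (Finset.mem_insert_self _ _)).add (ih fun i hi => h i (Finset.mem_insert_of_mem hi))

lemma Red.congr [Fact p.Prime] {q r : ℚ} {z : ZMod p} (h : Red p q z) (h' : Red p r z) :
    ratCongr p 1 q r := by
  obtain ⟨s, t, ht, e, f⟩ := h
  obtain ⟨s', t', ht', e', f'⟩ := h'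
  have hd : ((s * t' - s' * t : ℤ) : ZMod p) = 0 := by
    push_cast; rw [← f, ← f']; ring
  rw [ZMod.intCast_zmod_eq_zero_iff_dvd] at hd
  obtain ⟨u, hu⟩ := hd
  refine ⟨u, t * t', ?_, ?_⟩
  · intro h
    rcases (Nat.prime_iff_prime_int.1 (Fact.out : p.Prime)).dvd_or_dvd h with h | h <;> contradiction
  · have hu' : (s * t' - s' * t : ℚ) = p * u := by exact_mod_cast hu
    push_cast
    linear_combination hu' + t' * e - t * e'

/-- Numerator of the `k`-th term. -/
def N (k : ℕ) : ℕ := ∑ i ∈ Finset.range k, ∏ j ∈ (Finset.range k).erase i, (k + 1 + j)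

lemma P_deriv (k : ℕ) : (derivative (P p k)).eval 0 = (k.factorial : ZMod p)⁻¹ * N k := by
  rw [P, derivative_C_mul, eval_C_mul, derivative_prod_finset, N, eval_finsetSum]
  push_cast
  congr 1
  refine Finset.sum_congr rfl fun i _ => ?_
  simp [eval_prod]

lemma H_diff (k : ℕ) : H (2 * k) - H k = ∑ i ∈ Finset.range k, 1 / ((k : ℚ) + 1 + i) := by
  rw [H, H, two_mul, Finset.sum_range_add, add_sub_cancel_left]
  refine Finset.sum_congr rfl fun i _ => ?_
  push_cast; congr 1; ring

lemma choose_prod (k : ℕ) : ((2 * k).choose k : ℚ) * k.factorial = ∏ j ∈ Finset.range k, ((k : ℚ) + 1 + j) := by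
  have h : (2 * k).choose k * k.factorial = ∏ j ∈ Finset.range k, (k + 1 + j) := by
    rw [← Nat.ascFactorial_eq_prod_range, Nat.ascFactorial_eq_factorial_mul_choose, mul_comm, two_mul]
  exact_mod_cast h

lemma term_eq (k : ℕ) : ((2 * k).choose k : ℚ) * (H (2 * k) - H k) * k.factorial = N k := by
  rw [mul_right_comm, choose_prod, H_diff, Finset.mul_sum, N]
  push_cast
  refine Finset.sum_congr rfl fun i hi => ?_
  rw [← Finset.mul_prod_erase _ _ hi]
  have : (k : ℚ) + 1 + i ≠ 0 := by positivity
  field_simp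

lemma red_term [Fact p.Prime] (k : ℕ) (hk : k + 1 < p) :
    Red p (((2 * k).choose k : ℚ) / (k + 1) * (H (2 * k) - H k))
      ((C ((k : ZMod p) + 1)⁻¹ * P p k).derivative.eval 0) := by
  have hp := (Fact.out : p.Prime)
  have hne : ((k : ZMod p) + 1) ≠ 0 := by
    have := natCast_ne (p := p) (Nat.succ_pos k) hk
    push_cast at this; exact this
  have hf : ¬ p ∣ k.factorial := fun h => by have := hp.dvd_factorial.1 h; omega
  have hf' : (k.factorial : ZMod p) ≠ 0 := by rwa [Ne, ZMod.natCast_eq_zero_iff]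
  refine ⟨N k, ((k.factorial * (k + 1) : ℕ) : ℤ), ?_, ?_, ?_⟩
  · rw [Int.natCast_dvd_natCast]
    intro h
    rcases hp.dvd_mul.1 h with h | h
    · exact hf h
    · exact Nat.not_dvd_of_pos_of_lt (Nat.succ_pos k) hk h
  · have := term_eq k
    push_cast
    rw [← this]
    have : (k : ℚ) + 1 ≠ 0 := by positivity
    field_simp
  · rw [derivative_C_mul, eval_C_mul, P_deriv]
    push_cast
    field_simp

end CatH

theorem sum_catalan_harmonic (p : ℕ) (hp : p.Prime) (hp5 : 5 ≤ p) :
    ratCongr p 1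
      (∑ k ∈ Finset.range (p - 1), ((2 * k).choose k : ℚ) / (k + 1) * (H (2 * k) - H k))
      (5 / 2 + 3 / 2 * (leg3 p : ℚ)) := by
  haveI : Fact p.Prime := ⟨hp⟩
  have h1 : CatH.Red p _ _ := CatH.Red.sum (p := p) (Finset.range (p - 1))
    (fun k hk => CatH.red_term (p := p) k (by have := Finset.mem_range.1 hk; omega))
  refine h1.congr ⟨5 + 3 * leg3 p, 2, ?_, ?_, ?_⟩
  · intro h
    have := Int.le_of_dvd (by norm_num) h
    omega
  · push_cast; ring
  · have := CatH.F_deriv hp5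
    rw [CatH.F, Polynomial.derivative_sum, Polynomial.eval_finsetSum] at this
    push_cast
    rw [← this, mul_comm]
end

section
/- Let p ≥ 5 be a prime and r a non-negative integer. Then ∑_{k=rp}^{(r+1)p-1} C(2k,k)/(k+1) ≡ C(2r,r)·( (3/2)·(p/3) - 1/2 - r/(r+1) ) (mod p²), as a congruence of rational numbers, where (p/3) denotes the Legendre symbol of p modulo 3. -/
/-- The period-3 character on naturals. -/
def chi3 (n : ℕ) : ℤ := if n % 3 = 1 then 1 else if n % 3 = 2 then -1 else 0

/-- generating series of `chi3` -/
noncomputable def gser : PowerSeries ℤ := PowerSeries.mk chi3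

/-- partial sums of central binomials -/
def cbs (n : ℕ) : ℤ := ∑ k ∈ Finset.range n, ((2 * k).choose k : ℤ)

lemma gser_mul : (1 + PowerSeries.X + PowerSeries.X ^ 2) * gser = PowerSeries.X := by
  ext n
  rw [add_mul, add_mul, one_mul, pow_two, mul_assoc]
  rcases n with _ | _ | n
  · simp [gser, chi3]
  · simp [gser, chi3, PowerSeries.coeff_succ_X_mul]
  · simp only [map_add, PowerSeries.coeff_succ_X_mul, gser, PowerSeries.coeff_mk,
      PowerSeries.coeff_X, chi3]
    split_ifs <;> omega

lemma coeff_one_add_pow (N k : ℕ) :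
    PowerSeries.coeff k ((1 + PowerSeries.X : PowerSeries ℤ) ^ N) = (N.choose k : ℤ) := by
  have : ((1 + PowerSeries.X : PowerSeries ℤ) ^ N)
      = (((1 + Polynomial.X : Polynomial ℤ) ^ N : Polynomial ℤ) : PowerSeries ℤ) := by
    push_cast; rfl
  rw [this, Polynomial.coeff_coe, Polynomial.coeff_one_add_X_pow]

lemma cbs_eq (n : ℕ) :
    PowerSeries.coeff n ((1 + PowerSeries.X : PowerSeries ℤ) ^ (2 * n) * gser) = cbs n := by
  induction n with
  | zero => simp [gser, chi3, cbs]
  | succ n ih =>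
    have : (1 + PowerSeries.X : PowerSeries ℤ) ^ (2 * (n + 1)) * gser
        = PowerSeries.X * ((1 + PowerSeries.X) ^ (2 * n) * gser)
          + PowerSeries.X * (1 + PowerSeries.X) ^ (2 * n) := by
      have h := gser_mul
      linear_combination (1 + PowerSeries.X : PowerSeries ℤ) ^ (2 * n) * h
    rw [this, map_add, PowerSeries.coeff_succ_X_mul, PowerSeries.coeff_succ_X_mul, ih,
      coeff_one_add_pow, cbs, cbs, Finset.sum_range_succ]

lemma chi3_mul (a b : ℕ) : chi3 (a * b) = chi3 a * chi3 b := by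
  have ha : a % 3 = 0 ∨ a % 3 = 1 ∨ a % 3 = 2 := by omega
  have hb : b % 3 = 0 ∨ b % 3 = 1 ∨ b % 3 = 2 := by omega
  rcases ha with ha | ha | ha <;> rcases hb with hb | hb | hb <;>
    simp [chi3, Nat.mul_mod, ha, hb]

lemma coeff_expand_gser (p r : ℕ) (hp : 0 < p) (f : Polynomial ℤ) :
    PowerSeries.coeff (r * p) ((Polynomial.expand ℤ p f : PowerSeries ℤ) * gser)
      = chi3 p * PowerSeries.coeff r ((f : PowerSeries ℤ) * gser) := by
  induction f using Polynomial.induction_on' with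
  | add f g hf hg =>
    rw [map_add, Polynomial.coe_add, Polynomial.coe_add, add_mul, add_mul, map_add, map_add, hf, hg]
    ring
  | monomial n a =>
    rw [Polynomial.expand_monomial, ← Polynomial.C_mul_X_pow_eq_monomial,
      ← Polynomial.C_mul_X_pow_eq_monomial]
    simp only [Polynomial.coe_mul, Polynomial.coe_C, Polynomial.coe_pow, Polynomial.coe_X, mul_assoc,
      PowerSeries.coeff_C_mul, PowerSeries.coeff_X_pow_mul', gser, PowerSeries.coeff_mk]
    by_cases h : n ≤ r
    · rw [if_pos h, if_pos (Nat.mul_le_mul_right p h), ← Nat.sub_mul, chi3_mul]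
      ring
    · rw [if_neg h, if_neg (by intro h'; exact h (Nat.le_of_mul_le_mul_right h' hp))]
      ring

lemma coeff_mul_expand_zero (p n : ℕ) (hp : 0 < p) (f h : Polynomial ℤ)
    (hf : ∀ i, i % p = n % p → f.coeff i = 0) :
    (f * Polynomial.expand ℤ p h).coeff n = 0 := by
  rw [Polynomial.coeff_mul]
  apply Finset.sum_eq_zero
  rintro ⟨i, j⟩ hij
  rw [Finset.HasAntidiagonal.mem_antidiagonal] at hij
  simp only at hij ⊢
  rw [Polynomial.coeff_expand hp]
  split_ifs with hd
  · obtain ⟨c, rfl⟩ := hd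
    rw [hf i (by rw [← hij, Nat.add_mul_mod_self_left]), zero_mul]
  · simp

lemma exists_Q (p : ℕ) (hp : p.Prime) : ∃ Q : Polynomial ℤ,
    (1 + Polynomial.X) ^ p = 1 + Polynomial.X ^ p + (p : Polynomial ℤ) * Q ∧
    (∀ i, p ≤ i → Q.coeff i = 0) ∧ Q.coeff 0 = 0 := by
  obtain ⟨Q0, hQ0⟩ := exists_add_pow_prime_eq hp (1 : Polynomial ℤ) Polynomial.X
  rw [one_pow, mul_one, mul_assoc] at hQ0
  obtain ⟨Q, hQ⟩ : ∃ Q, (1 + Polynomial.X : Polynomial ℤ) ^ p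
      = 1 + Polynomial.X ^ p + (p : Polynomial ℤ) * Q := ⟨_, hQ0⟩
  have hp0 : (p : ℤ) ≠ 0 := by exact_mod_cast hp.ne_zero
  have key : ∀ i, (p.choose i : ℤ)
      = (if i = 0 then 1 else 0) + (if i = p then 1 else 0) + p * Q.coeff i := by
    intro i
    have h := congrArg (fun f => Polynomial.coeff f i) hQ
    simp only [Polynomial.coeff_one_add_X_pow, Polynomial.coeff_add, Polynomial.coeff_one,
      Polynomial.coeff_X_pow, Polynomial.coeff_natCast_mul] at h
    exact h
  refine ⟨Q, hQ, ?_, ?_⟩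
  · intro i hi
    have h := key i
    have hp' := hp.pos
    rw [if_neg (by omega)] at h
    rcases hi.eq_or_lt with rfl | hlt
    · simp at h
      rcases h with h | h
      · omega
      · exact h
    · rw [Nat.choose_eq_zero_of_lt hlt, if_neg (by omega)] at h
      simp at h
      rcases h with h | h
      · omega
      · exact h
  · have h := key 0
    have hp' := hp.pos
    rw [if_neg (by omega : (0 : ℕ) ≠ p)] at h
    simp at h
    rcases h with h | h
    · omega
    · exact h

lemma three_dvd (p : ℕ) (hp3 : p % 3 ≠ 0) (hodd : Odd p) :
    (1 + Polynomial.X + Polynomial.X ^ 2 : Polynomial ℤ) ∣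
      (1 + Polynomial.X) ^ p - (1 + Polynomial.X ^ p) := by
  set m := (1 + Polynomial.X + Polynomial.X ^ 2 : Polynomial ℤ) with hm
  have h1 : m ∣ (1 + Polynomial.X) ^ p - (-Polynomial.X ^ 2) ^ p := by
    refine dvd_trans ?_ (sub_dvd_pow_sub_pow _ _ p)
    exact ⟨1, by rw [hm]; ring⟩
  have h3 : ∀ q, m ∣ (Polynomial.X ^ 3) ^ q - 1 ^ q := fun q => by
    refine dvd_trans ?_ (sub_dvd_pow_sub_pow _ _ q)
    exact ⟨Polynomial.X - 1, by rw [hm]; ring⟩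
  have h4 : m ∣ Polynomial.X ^ (2*p) + Polynomial.X ^ p + 1 := by
    obtain ⟨c, hc⟩ := h3 (p / 3)
    rw [one_pow, sub_eq_iff_eq_add, ← pow_mul] at hc
    have : p = 3 * (p/3) + 1 ∨ p = 3 * (p/3) + 2 := by omega
    rcases this with h | h
    · rw [h, show 2 * (3 * (p/3) + 1) = 3 * (p/3) + 3 * (p/3) + 2 by ring]
      simp only [pow_add, hc]
      exact ⟨c ^ 2 * m * Polynomial.X^2 + 2 * c * Polynomial.X^2 + c * Polynomial.X + 1, by
        rw [hm]; ring⟩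
    · rw [h, show 2 * (3 * (p/3) + 2) = 3 * (p/3) + 3 * (p/3) + 4 by ring]
      simp only [pow_add, hc]
      exact ⟨c ^ 2 * m * Polynomial.X^4 + 2 * c * Polynomial.X^4 + c * Polynomial.X^2
        + (Polynomial.X^2 - Polynomial.X + 1), by rw [hm]; ring⟩
  have h5 : (1 + Polynomial.X) ^ p - (1 + Polynomial.X ^ p)
      = ((1 + Polynomial.X) ^ p - (-Polynomial.X ^ 2) ^ p)
        - (Polynomial.X ^ (2*p) + Polynomial.X ^ p + 1 : Polynomial ℤ) := by
    rw [hodd.neg_pow, ← pow_mul]; ring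
  rw [h5]
  exact dvd_sub h1 h4

lemma m_monic : (1 + Polynomial.X + Polynomial.X ^ 2 : Polynomial ℤ).Monic := by
  monicity!

lemma m_natDegree : (1 + Polynomial.X + Polynomial.X ^ 2 : Polynomial ℤ).natDegree = 2 := by
  compute_degree!

lemma exists_R (p : ℕ) (hp : p.Prime) (hodd : Odd p) (hp3 : p % 3 ≠ 0) : ∃ R Q : Polynomial ℤ,
    (1 + Polynomial.X) ^ p = 1 + Polynomial.X ^ p + (p : Polynomial ℤ) * Q ∧
    Q = (1 + Polynomial.X + Polynomial.X ^ 2) * R ∧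
    (∀ i, p ≤ i → Q.coeff i = 0) ∧ Q.coeff 0 = 0 ∧ (∀ i, p - 1 ≤ i → R.coeff i = 0) := by
  obtain ⟨Q, hQ, hQd, hQ0⟩ := exists_Q p hp
  have hp0 : (p : ℤ) ≠ 0 := by exact_mod_cast hp.ne_zero
  have hdvd : (1 + Polynomial.X + Polynomial.X ^ 2 : Polynomial ℤ) ∣ (p : ℤ) • Q := by
    have h := three_dvd p hp3 hodd
    rw [hQ, add_sub_cancel_left] at h
    rw [Polynomial.smul_eq_C_mul]
    simpa using h
  rw [← Polynomial.modByMonic_eq_zero_iff_dvd m_monic, Polynomial.smul_modByMonic,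
    smul_eq_zero, or_iff_right hp0, Polynomial.modByMonic_eq_zero_iff_dvd m_monic] at hdvd
  obtain ⟨R, hR⟩ := hdvd
  refine ⟨R, Q, hQ, hR, hQd, hQ0, ?_⟩
  intro i hi
  by_cases hR0 : R = 0
  · simp [hR0]
  apply Polynomial.coeff_eq_zero_of_natDegree_lt
  have hd : Q.natDegree = 2 + R.natDegree := by
    rw [hR, m_monic.natDegree_mul' hR0, m_natDegree]
  by_contra hcon
  have : Q.coeff Q.natDegree = 0 := hQd _ (by omega)
  rw [Polynomial.coeff_natDegree, Polynomial.leadingCoeff_eq_zero] at this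
  rw [this, Polynomial.natDegree_zero] at hd
  omega

lemma expand_aux (p N : ℕ) :
    (1 + Polynomial.X ^ p : Polynomial ℤ) ^ N
      = Polynomial.expand ℤ p ((1 + Polynomial.X) ^ N) := by
  simp

lemma main_congr (p r : ℕ) (hp : p.Prime) (hodd : Odd p) (hp3 : p % 3 ≠ 0) :
    ((p : ℤ) ^ 2 ∣ cbs (r * p) - chi3 p * cbs r) ∧
    ((p : ℤ) ^ 2 ∣ ((2 * (r * p)).choose (r * p) : ℤ) - ((2 * r).choose r : ℤ)) := by
  obtain ⟨R, Q, hQ, hR, hQd, hQ0, hRd⟩ := exists_R p hp hodd hp3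
  obtain ⟨K, hK⟩ := Polynomial.powAddExpansion (1 + Polynomial.X ^ p : Polynomial ℤ)
    ((p : Polynomial ℤ) * Q) (2 * r)
  rw [← hQ, ← pow_mul, expand_aux, expand_aux, show p * (2 * r) = 2 * (r * p) by ring] at hK
  set E := Polynomial.expand ℤ p ((1 + Polynomial.X) ^ (2 * r)) with hE
  set F := Polynomial.expand ℤ p ((1 + Polynomial.X) ^ (2 * r - 1)) with hF
  have hpp := hp.two_le
  constructor
  · rcases Nat.eq_zero_or_pos r with rfl | hr
    · simp [cbs]
    have hRF : (R * F).coeff (r * p - 1) = 0 := by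
      apply coeff_mul_expand_zero p _ hp.pos
      intro i hi
      apply hRd
      obtain ⟨r, rfl⟩ : ∃ s, r = s + 1 := ⟨r - 1, by omega⟩
      have h1 : ((r + 1) * p - 1) % p = p - 1 := by
        rw [show (r + 1) * p - 1 = (p - 1) + r * p by
          rw [add_mul, one_mul]; omega, Nat.add_mul_mod_self_right, Nat.mod_eq_of_lt (by omega)]
      rw [h1] at hi
      rw [← hi]
      exact Nat.mod_le _ _
    have hser : (1 + PowerSeries.X : PowerSeries ℤ) ^ (2 * (r * p)) * gser
        = (E : PowerSeries ℤ) * gser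
          + PowerSeries.C ((2 * r : ℤ) * p) * (PowerSeries.X * ((R * F : Polynomial ℤ) : PowerSeries ℤ))
          + PowerSeries.C ((p : ℤ) ^ 2) * (((K * Q ^ 2 : Polynomial ℤ) : PowerSeries ℤ) * gser) := by
      have h := congrArg (fun f : Polynomial ℤ => (f : PowerSeries ℤ)) hK
      have hR' := congrArg (fun f : Polynomial ℤ => (f : PowerSeries ℤ)) hR
      have hc : ∀ n : ℕ, ((n : Polynomial ℤ) : PowerSeries ℤ) = (n : PowerSeries ℤ) := fun n => by
        exact map_natCast (Polynomial.coeToPowerSeries.ringHom (R := ℤ)) n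
      simp only [Polynomial.coe_mul, Polynomial.coe_add, Polynomial.coe_pow, Polynomial.coe_one,
        Polynomial.coe_X, hc] at h hR' ⊢
      simp only [map_mul, map_pow, map_natCast, map_ofNat]
      push_cast at h
      rw [h]
      have hg := gser_mul
      linear_combination (2 * r * p * (F : PowerSeries ℤ) * gser) * hR'
        + (2 * r * p * (F : PowerSeries ℤ) * R) * hg
    have h := congrArg (PowerSeries.coeff (r * p)) hser
    rw [cbs_eq, map_add, map_add, PowerSeries.coeff_C_mul, PowerSeries.coeff_C_mul, hE,
      coeff_expand_gser p r hp.pos] at h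
    have h0 : PowerSeries.coeff (r * p)
        (PowerSeries.X * ((R * F : Polynomial ℤ) : PowerSeries ℤ)) = 0 := by
      have : 0 < r * p := Nat.mul_pos hr hp.pos
      rw [show r * p = (r * p - 1) + 1 by omega, PowerSeries.coeff_succ_X_mul,
        Polynomial.coeff_coe, hRF]
    rw [h0] at h
    have h2 : PowerSeries.coeff r ((((1 + Polynomial.X) ^ (2 * r) : Polynomial ℤ) : PowerSeries ℤ) * gser)
        = cbs r := by
      rw [← cbs_eq]
      push_cast
      rfl
    rw [h2] at h
    exact ⟨PowerSeries.coeff (r * p) (((K * Q ^ 2 : Polynomial ℤ) : PowerSeries ℤ) * gser), by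
      linear_combination h⟩
  · have hQF : (Q * F).coeff (r * p) = 0 := by
      apply coeff_mul_expand_zero p _ hp.pos
      intro i hi
      rw [Nat.mul_mod_left] at hi
      rcases Nat.eq_zero_or_pos i with rfl | hi0
      · exact hQ0
      · exact hQd i (Nat.le_of_dvd hi0 (Nat.dvd_of_mod_eq_zero hi))
    have hK2 : (1 + Polynomial.X : Polynomial ℤ) ^ (2 * (r * p))
        = E + Polynomial.C ((2 * r : ℤ) * p) * (Q * F)
          + Polynomial.C ((p : ℤ) ^ 2) * (K * Q ^ 2) := by
      rw [hK]
      simp only [map_mul, map_pow, map_natCast, map_ofNat]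
      push_cast
      ring
    have h := congrArg (fun f => Polynomial.coeff f (r * p)) hK2
    simp only [Polynomial.coeff_add, Polynomial.coeff_C_mul, hQF, Polynomial.coeff_one_add_X_pow,
      hE, Polynomial.coeff_expand_mul hp.pos] at h
    exact ⟨(K * Q ^ 2).coeff (r * p), by linear_combination h⟩

lemma cat_term (k : ℕ) : ((2 * k).choose k : ℚ) / (k + 1)
    = 2 * ((2 * k).choose k : ℚ) - ((2 * (k + 1)).choose (k + 1) : ℚ) / 2 := by
  have h := Nat.succ_mul_centralBinom_succ k
  simp only [Nat.centralBinom_eq_two_mul_choose] at h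
  have h' : ((k : ℚ) + 1) * ((2 * (k + 1)).choose (k + 1) : ℚ)
      = 2 * (2 * k + 1) * ((2 * k).choose k : ℚ) := by exact_mod_cast h
  have hk : (k : ℚ) + 1 ≠ 0 := by positivity
  field_simp
  linarith

lemma cat_sum (n : ℕ) : ∑ k ∈ Finset.range n, ((2 * k).choose k : ℚ) / (k + 1)
    = 3 / 2 * (cbs n : ℚ) + 1 / 2 - ((2 * n).choose n : ℚ) / 2 := by
  induction n with
  | zero => simp [cbs]
  | succ n ih =>
    rw [Finset.sum_range_succ, ih, cat_term, cbs, cbs, Finset.sum_range_succ]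
    push_cast
    ring

theorem block_sum_catalan (p r : ℕ) (hp : p.Prime) (hp5 : 5 ≤ p) :
    ratCongr p 2
      (∑ k ∈ Finset.Ico (r * p) ((r + 1) * p), ((2 * k).choose k : ℚ) / (k + 1))
      (((2 * r).choose r : ℚ) * (3 / 2 * (leg3 p : ℚ) - 1 / 2 - r / (r + 1))) := by
  have hodd : Odd p := hp.odd_of_ne_two (by omega)
  have hp3 : p % 3 ≠ 0 := by
    intro h
    have := (Nat.prime_dvd_prime_iff_eq Nat.prime_three hp).1 (Nat.dvd_of_mod_eq_zero h)
    omega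
  have hchi : chi3 p = leg3 p := by
    unfold chi3 leg3
    split_ifs <;> omega
  obtain ⟨⟨a, ha⟩, ⟨b, hb⟩⟩ := main_congr p r hp hodd hp3
  obtain ⟨⟨c, hc⟩, ⟨d, hd⟩⟩ := main_congr p (r + 1) hp hodd hp3
  refine ⟨3 * (c - a) - (d - b), 2, ?_, ?_⟩
  · intro h
    have := Int.le_of_dvd (by norm_num) h
    omega
  · have hle : r * p ≤ (r + 1) * p := Nat.mul_le_mul_right p (by omega)
    rw [Finset.sum_Ico_eq_sub _ hle, cat_sum, cat_sum, ← hchi]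
    have hs : (cbs (r + 1) : ℚ) = cbs r + ((2 * r).choose r : ℚ) := by
      rw [cbs, cbs, Finset.sum_range_succ]; push_cast; ring
    have ht := cat_term r
    have hr : ((2 * r).choose r : ℚ) * (r / (r + 1))
        = ((2 * r).choose r : ℚ) - ((2 * r).choose r : ℚ) / (r + 1) := by
      have hk : (r : ℚ) + 1 ≠ 0 := by positivity
      field_simp
      ring
    have ha' : (cbs (r * p) : ℚ) - chi3 p * cbs r = p ^ 2 * a := by exact_mod_cast ha
    have hc' : (cbs ((r + 1) * p) : ℚ) - chi3 p * cbs (r + 1) = p ^ 2 * c := by exact_mod_cast hc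
    have hb' : ((2 * (r * p)).choose (r * p) : ℚ) - ((2 * r).choose r : ℚ) = p ^ 2 * b := by
      exact_mod_cast hb
    have hd' : ((2 * ((r + 1) * p)).choose ((r + 1) * p) : ℚ)
        - ((2 * (r + 1)).choose (r + 1) : ℚ) = p ^ 2 * d := by
      exact_mod_cast hd
    rw [mul_sub, hr, ht]
    rw [hs] at hc'
    push_cast
    linear_combination 3 * hc' - 3 * ha' - hd' + hb'
end

section
/- Let p ≥ 5 be a prime with p ≡ 2 (mod 3) and let r be a non-negative integer. Then ∑_{k=rp}^{(r+1)p-1} C(2k,k)/(k+1) ≡ -C(2r,r)·(3r+2)/(r+1) (mod p²), as a congruence of rational numbers (in fact of integers, since both sides are integers). -/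
namespace BlockCatalan

open Polynomial

/-- `∑_{k<n} (1+X)^{2k} X^{n-1-k}`. -/
noncomputable def Q (n : ℕ) : ℤ[X] :=
  ∑ k ∈ Finset.range n, ((1 + X) ^ 2) ^ k * X ^ (n - 1 - k)

theorem Q_mul (n : ℕ) : (1 + X + X ^ 2) * Q n = (1 + X) ^ (2 * n) - X ^ n := by
  have h := (Commute.all ((1 + X : ℤ[X]) ^ 2) X).geom_sum₂_mul n
  rw [pow_mul, ← h, Q]
  ring

theorem coeff_Q (n : ℕ) :
    (Q n).coeff n = ∑ k ∈ Finset.range n, ((2 * k).choose (k + 1) : ℤ) := by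
  rw [Q, finsetSum_coeff]
  refine Finset.sum_congr rfl fun k hk => ?_
  have hk := Finset.mem_range.1 hk
  rw [← pow_mul, coeff_mul_X_pow', if_pos (by omega), coeff_one_add_X_pow,
    show n - (n - 1 - k) = k + 1 by omega]

theorem coeff_X_mul_Q (n : ℕ) :
    (X * Q n).coeff n = ∑ k ∈ Finset.range n, ((2 * k).choose k : ℤ) := by
  rw [Q, Finset.mul_sum, finsetSum_coeff]
  refine Finset.sum_congr rfl fun k hk => ?_
  have hk := Finset.mem_range.1 hk
  rw [show (X : ℤ[X]) * (((1 + X) ^ 2) ^ k * X ^ (n - 1 - k))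
      = (1 + X) ^ (2 * k) * X ^ (n - 1 - k + 1) by rw [pow_mul]; ring,
    coeff_mul_X_pow', if_pos (by omega), coeff_one_add_X_pow,
    show n - (n - 1 - k + 1) = k by omega]

/-- `∑_{i<n} X^{3i}`. -/
noncomputable def T (n : ℕ) : ℤ[X] := ∑ i ∈ Finset.range n, (X ^ 3) ^ i

theorem T_mul (n : ℕ) : T n * (X ^ 3 - 1) = X ^ (3 * n) - 1 := by
  rw [T, geom_sum_mul, pow_mul]

/-- `Φ(X^p)/Φ(X)` for `p = 3m+2`. -/
noncomputable def E (m : ℕ) : ℤ[X] := 1 + (X - 1) * X ^ 2 * T m + (X - 1) * X * T (2 * m + 1)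

theorem E_mul (m : ℕ) : (1 + X + X ^ 2) * E m = 1 + X ^ (3 * m + 2) + X ^ (2 * (3 * m + 2)) := by
  have h1 := T_mul m
  have h2 := T_mul (2 * m + 1)
  rw [E]
  rw [show (1 + X + X ^ 2 : ℤ[X]) * (1 + (X - 1) * X ^ 2 * T m + (X - 1) * X * T (2 * m + 1))
    = (1 + X + X ^ 2) + X ^ 2 * (T m * (X ^ 3 - 1)) + X * (T (2 * m + 1) * (X ^ 3 - 1)) by ring,
    h1, h2]
  ring

theorem contract_E (m : ℕ) : contract (3 * m + 2) ((X - 1) * E m) = -1 - 2 * X := by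
  ext n
  rw [coeff_contract (by omega)]
  have e : (X - 1) * E m = (X - 1)
      + ∑ i ∈ Finset.range m, (X ^ (3 * i + 4) - C 2 * X ^ (3 * i + 3) + X ^ (3 * i + 2))
      + ∑ i ∈ Finset.range (2 * m + 1),
          (X ^ (3 * i + 3) - C 2 * X ^ (3 * i + 2) + X ^ (3 * i + 1)) := by
    rw [E, T, T]
    have c2 : (C 2 : ℤ[X]) = 2 := rfl
    rw [show ∀ a b : ℤ[X], (X - 1) * (1 + (X - 1) * X ^ 2 * a + (X - 1) * X * b)
      = (X - 1) + ((X - 1) ^ 2 * X ^ 2) * a + ((X - 1) ^ 2 * X) * b by intro a b; ring,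
      Finset.mul_sum, Finset.mul_sum]
    congr 1
    · congr 1
      refine Finset.sum_congr rfl fun i _ => ?_
      rw [c2]; ring
    · refine Finset.sum_congr rfl fun i _ => ?_
      rw [c2]; ring
  rw [e]
  have s1 : ∀ n, ∑ i ∈ Finset.range m, (X ^ (3 * i + 4) - C 2 * X ^ (3 * i + 3)
      + X ^ (3 * i + 2) : ℤ[X]).coeff (n * (3 * m + 2)) = 0 := by
    intro n
    refine Finset.sum_eq_zero fun i hi => ?_
    have hi := Finset.mem_range.1 hi
    simp only [coeff_add, coeff_sub, coeff_C_mul, coeff_X_pow]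
    rcases n with _ | n
    · simp
    · have : (n + 1) * (3 * m + 2) ≥ 3 * m + 2 := Nat.le_mul_of_pos_left _ (by omega)
      rw [if_neg (by omega), if_neg (by omega), if_neg (by omega)]; simp
  rw [coeff_add, coeff_add, finsetSum_coeff, finsetSum_coeff, s1]
  rw [show (-1 - 2 * X : ℤ[X]) = C (-1) - C 2 * X by simp]
  simp only [coeff_add, coeff_sub, coeff_C_mul, coeff_X_pow, coeff_X, coeff_one, coeff_C]
  rcases n with _ | _ | n
  · simp
  · rw [Finset.sum_eq_single m]
    · simp
    · intro i hi hne
      rw [if_neg (by omega), if_neg (by omega), if_neg (by omega)]; simp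
    · intro hm
      exact absurd (Finset.mem_range.2 (by omega)) hm
  · have : (n + 1 + 1) * (3 * m + 2) ≥ 2 * (3 * m + 2) := Nat.mul_le_mul_right _ (by omega)
    rw [Finset.sum_eq_zero]
    · rw [if_neg (by omega), if_neg (by omega), if_neg (by omega), if_neg (by omega)]; simp
    · intro i hi
      have hi := Finset.mem_range.1 hi
      rw [if_neg (by omega), if_neg (by omega), if_neg (by omega)]; simp

theorem monicPhi : (1 + X + X ^ 2 : ℤ[X]).Monic := by
  rw [show (1 + X + X ^ 2 : ℤ[X]) = X ^ 2 + X + 1 by ring]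
  monicity!

theorem natDegreePhi : (1 + X + X ^ 2 : ℤ[X]).natDegree = 2 := by
  compute_degree!

theorem exists_h (m : ℕ) (hp : (3 * m + 2).Prime) (h5 : 5 ≤ 3 * m + 2) :
    ∃ h : ℤ[X], (1 + X) ^ (3 * m + 2) = 1 + X ^ (3 * m + 2)
        + ((3 * m + 2 : ℕ) : ℤ[X]) * ((1 + X + X ^ 2) * h)
      ∧ contract (3 * m + 2) ((X - 1) * h) = 0 := by
  have hodd : Odd (3 * m + 2) := hp.odd_of_ne_two (by omega)
  have hE := E_mul m
  set p := 3 * m + 2 with hpdef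
  obtain ⟨g, hg⟩ : ∃ g : ℤ[X], (1 + X) ^ p = 1 + X ^ p + (p : ℤ[X]) * g := by
    have := add_pow_prime_eq hp (1 : ℤ[X]) X
    rw [one_pow, mul_assoc (p : ℤ[X]), mul_assoc (p : ℤ[X])] at this
    exact ⟨_, this⟩
  have hp0 : (p : ℤ) ≠ 0 := by exact_mod_cast hp.ne_zero
  have hcg : ∀ n, (p : ℤ) * g.coeff n = (p.choose n : ℤ) - (if n = 0 then 1 else 0)
      - (if n = p then 1 else 0) := by
    intro n
    have := congrArg (fun f => coeff f n) hg
    simp only [coeff_add, coeff_one, coeff_X_pow, coeff_one_add_X_pow, coeff_natCast_mul] at this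
    linarith
  have hdvd : (1 + X + X ^ 2 : ℤ[X]) ∣ (p : ℤ) • g := by
    have h1 : (1 + X + X ^ 2 : ℤ[X]) ∣ (1 + X) ^ p + (X ^ 2) ^ p := hodd.add_dvd_pow_add_pow _ _
    have h2 : (1 + X + X ^ 2 : ℤ[X]) ∣ 1 + X ^ p + X ^ (2 * p) := ⟨_, hE.symm⟩
    have := dvd_sub h1 h2
    rw [hg, ← pow_mul] at this
    convert this using 1
    rw [zsmul_eq_mul]; push_cast; ring
  have hdvd2 : (1 + X + X ^ 2 : ℤ[X]) ∣ g := by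
    rw [← modByMonic_eq_zero_iff_dvd monicPhi] at hdvd ⊢
    rw [smul_modByMonic] at hdvd
    exact (smul_eq_zero.1 hdvd).resolve_left hp0
  obtain ⟨h, rfl⟩ := hdvd2
  refine ⟨h, hg, ?_⟩
  have h0 : h.coeff 0 = 0 := by
    have := hcg 0
    rw [mul_coeff_zero] at this
    have hpp : ¬ (0 = p) := by omega
    simpa [hp0, hpp] using this
  have hdeg : h.natDegree + 2 ≤ p := by
    by_cases hh : h = 0
    · subst hh; simp; omega
    have e := monicPhi.natDegree_mul' hh
    rw [natDegreePhi] at e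
    have : ((1 + X + X ^ 2) * h).natDegree ≤ p := by
      rw [natDegree_le_iff_coeff_eq_zero]
      intro N hN
      have := hcg N
      rw [Nat.choose_eq_zero_of_lt hN, if_neg (by omega), if_neg (by omega)] at this
      simpa [hp0] using this
    omega
  ext n
  rw [coeff_contract (by omega), coeff_zero]
  rcases n with _ | n
  · simp [h0]
  · apply coeff_eq_zero_of_natDegree_lt
    have h1 : ((X - 1) * h).natDegree ≤ 1 + h.natDegree :=
      natDegree_mul_le_of_le (by compute_degree) le_rfl
    have h2 : (n + 1) * p ≥ p := Nat.le_mul_of_pos_left _ (by omega)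
    omega

theorem key (m r : ℕ) (hp : (3 * m + 2).Prime) (h5 : 5 ≤ 3 * m + 2) :
    ∃ s : ℤ, ∑ k ∈ Finset.range (r * (3 * m + 2)),
        (((2 * k).choose k : ℤ) - ((2 * k).choose (k + 1) : ℤ))
      = - 2 * ∑ k ∈ Finset.range r, ((2 * k).choose k : ℤ)
        - ∑ k ∈ Finset.range r, ((2 * k).choose (k + 1) : ℤ) + ((3 * m + 2 : ℕ) : ℤ) ^ 2 * s := by
  obtain ⟨h, hh, hc⟩ := exists_h m hp h5
  have hE := E_mul m
  have hcE := contract_E m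
  have hp0 : 3 * m + 2 ≠ 0 := by omega
  set p := 3 * m + 2 with hpdef
  clear_value p
  obtain ⟨K, hK⟩ := powAddExpansion (1 + X ^ p : ℤ[X])
    ((p : ℤ[X]) * ((1 + X + X ^ 2) * h)) (2 * r)
  rw [← hh] at hK
  have hQr := congrArg (expand ℤ p) (Q_mul r)
  simp only [map_mul, map_add, map_sub, map_pow, map_one, expand_X] at hQr
  have hQ := Q_mul (r * p)
  have main : Q (r * p) = E m * expand ℤ p (Q r)
      + h * expand ℤ p (C (p : ℤ) * (C (2 * r : ℤ) * (1 + X) ^ (2 * r - 1)))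
      + C ((p : ℤ) ^ 2) * (K * (1 + X + X ^ 2) * h ^ 2) := by
    apply monicPhi.isRegular.left
    change (1 + X + X ^ 2) * _ = (1 + X + X ^ 2) * _
    simp only [map_mul, map_add, map_sub, map_pow, map_one, expand_X, expand_C]
    have cp : (C (p : ℤ) : ℤ[X]) = (p : ℤ[X]) := by simp
    have cr : (C (r : ℤ) : ℤ[X]) = (r : ℤ[X]) := by simp
    have c2 : (C 2 : ℤ[X]) = 2 := rfl
    rw [cp, cr, c2, hQ, mul_add, mul_add, ← mul_assoc (1 + X + X ^ 2) (E m), hE,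
      show 2 * (r * p) = p * (2 * r) by ring, pow_mul (1 + X) p, hK]
    have e2 : (1 + X ^ p + X ^ (2 * p) : ℤ[X]) * expand ℤ p (Q r)
        = (1 + X ^ p) ^ (2 * r) - (X ^ p) ^ r := by
      rw [← hQr]; ring
    rw [e2, ← pow_mul, mul_comm r p]
    push_cast
    ring
  have m2 : ((X - 1) * Q (r * p)).coeff (r * p) = ((-1 - 2 * X) * Q r).coeff r
      + (p : ℤ) ^ 2 * ((X - 1) * (K * (1 + X + X ^ 2) * h ^ 2)).coeff (r * p) := by
    rw [main, mul_add, mul_add, ← mul_assoc, ← mul_assoc (X - 1) h, coeff_add, coeff_add,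
      ← coeff_contract hp0, ← coeff_contract hp0, contract_mul_expand hp0,
      contract_mul_expand hp0, hcE, hc,
      mul_left_comm (X - 1) (C ((p : ℤ) ^ 2)), coeff_C_mul]
    simp
  refine ⟨((X - 1) * (K * (1 + X + X ^ 2) * h ^ 2)).coeff (r * p), ?_⟩
  rw [sub_mul, one_mul, coeff_sub, coeff_X_mul_Q, coeff_Q,
    show (-1 - 2 * X) * Q r = - Q r - C 2 * (X * Q r) by
      rw [show (C 2 : ℤ[X]) = 2 from rfl]; ring,
    coeff_sub, coeff_neg, coeff_C_mul, coeff_X_mul_Q, coeff_Q] at m2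
  rw [Finset.sum_sub_distrib, m2]
  ring

theorem choose_succ_rat (k : ℕ) :
    ((2 * k).choose (k + 1) : ℚ) = ((2 * k).choose k : ℚ) * k / (k + 1) := by
  have := Nat.choose_succ_right_eq (2 * k) k
  rw [show 2 * k - k = k by omega] at this
  have h2 : ((2 * k).choose (k + 1) : ℚ) * (k + 1) = ((2 * k).choose k : ℚ) * k := by
    exact_mod_cast this
  rw [← h2]
  field_simp

end BlockCatalan

theorem block_sum_catalan_two_mod_three (p r : ℕ) (hp : p.Prime) (hp5 : 5 ≤ p)
    (hp3 : p % 3 = 2) :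
    ratCongr p 2
      (∑ k ∈ Finset.Ico (r * p) ((r + 1) * p), ((2 * k).choose k : ℚ) / (k + 1))
      (-(((2 * r).choose r : ℚ) * (3 * r + 2) / (r + 1))) := by
  obtain ⟨m, rfl⟩ : ∃ m, p = 3 * m + 2 := ⟨p / 3, by omega⟩
  obtain ⟨s1, h1⟩ := BlockCatalan.key m r hp hp5
  obtain ⟨s2, h2⟩ := BlockCatalan.key m (r + 1) hp hp5
  set p := 3 * m + 2 with hpdef
  refine ⟨s2 - s1, 1, ?_, ?_⟩
  · intro h
    have := Int.le_of_dvd one_pos h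
    omega
  · have e : ∀ k : ℕ, ((2 * k).choose k : ℚ) / (k + 1)
        = (((((2 * k).choose k : ℤ) - ((2 * k).choose (k + 1) : ℤ) : ℤ)) : ℚ) := by
      intro k
      push_cast
      rw [BlockCatalan.choose_succ_rat]
      have : (k : ℚ) + 1 ≠ 0 := by positivity
      field_simp
      ring
    have hle : r * p ≤ (r + 1) * p := Nat.mul_le_mul_right _ (by omega)
    rw [Finset.sum_congr rfl (fun k _ => e k), ← Int.cast_sum, Finset.sum_Ico_eq_sub _ hle, h1, h2,
      Finset.sum_range_succ, Finset.sum_range_succ]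
    push_cast
    rw [BlockCatalan.choose_succ_rat]
    have : (r : ℚ) + 1 ≠ 0 := by positivity
    field_simp
    ring
end
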